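/- arXiv:math/0408008 — 8 statements merged into one kernel-verified Lean document; each statement's English description precedes it below -/
import Mathlib

section
/- Let 𝕂 be a nontrivially normed field and A a unital associative normed 𝕂-algebra (completeness of A is not assumed). Assume that the set of invertible elements {a : A | IsUnit a} is open in A and that the inversion map a ↦ a⁻¹ is continuous on this set. Then inversion is infinitely differentiable on the units: the map Ring.inverse : A → A is C^∞ (ContDiffOn 𝕂 ⊤) on the open set {a : A | IsUnit a}. -/
theorem stmt0 {𝕂 : Type*} [NontriviallyNormedField 𝕂]
    {A : Type*} [NormedRing A] [NormedAlgebra 𝕂 A]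
    (h_open : IsOpen {a : A | IsUnit a})
    (h_cont : ContinuousOn (Ring.inverse : A → A) {a : A | IsUnit a}) :
    ContDiffOn 𝕂 (⊤ : ℕ∞) (Ring.inverse : A → A) {a : A | IsUnit a} := by
  have hder : ∀ x ∈ {a : A | IsUnit a}, HasFDerivWithinAt (𝕜 := 𝕂) (Ring.inverse : A → A)
      (-(ContinuousLinearMap.mulLeftRight 𝕂 A (Ring.inverse x) (Ring.inverse x)))
      {a : A | IsUnit a} x := by
    intro x hx
    have hx1 : x * Ring.inverse x = 1 := Ring.mul_inverse_cancel x hx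
    have hlim : Filter.Tendsto (fun y : A => ‖Ring.inverse x - Ring.inverse y‖ * ‖Ring.inverse x‖)
        (nhdsWithin x {a : A | IsUnit a}) (nhds 0) := by
      have h := ((tendsto_const_nhds (x := Ring.inverse x)).sub (h_cont x hx)).norm.mul_const
        ‖Ring.inverse x‖
      simpa using h
    rw [hasFDerivWithinAt_iff_isLittleO, Asymptotics.isLittleO_iff]
    intro c hc
    filter_upwards [hlim.eventually (gt_mem_nhds hc), self_mem_nhdsWithin] with y hy hyu
    have hy1 : Ring.inverse y * y = 1 := Ring.inverse_mul_cancel y hyu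
    have key : Ring.inverse y - Ring.inverse x -
        (-(ContinuousLinearMap.mulLeftRight 𝕂 A (Ring.inverse x) (Ring.inverse x))) (y - x)
        = (Ring.inverse x - Ring.inverse y) * (y - x) * Ring.inverse x := by
      have e1 : Ring.inverse y * (y - x) * Ring.inverse x = Ring.inverse x - Ring.inverse y := by
        rw [mul_sub, hy1, sub_mul, one_mul, mul_assoc, hx1, mul_one]
      rw [sub_mul, sub_mul, e1]
      simp only [neg_apply, ContinuousLinearMap.mulLeftRight_apply]
      abel
    rw [key]
    calc ‖(Ring.inverse x - Ring.inverse y) * (y - x) * Ring.inverse x‖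
        ≤ ‖Ring.inverse x - Ring.inverse y‖ * ‖y - x‖ * ‖Ring.inverse x‖ :=
          (norm_mul_le _ _).trans (by gcongr; exact norm_mul_le _ _)
      _ = (‖Ring.inverse x - Ring.inverse y‖ * ‖Ring.inverse x‖) * ‖y - x‖ := by ring
      _ ≤ c * ‖y - x‖ := by gcongr
  rw [contDiffOn_infty]
  intro n
  induction n with
  | zero => exact contDiffOn_zero.2 h_cont
  | succ n ih =>
    rw [Nat.cast_succ, contDiffOn_succ_iff_hasFDerivWithinAt_of_uniqueDiffOn h_open.uniqueDiffOn]
    refine ⟨by simp, _, ?_, hder⟩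
    have hB := (ContinuousLinearMap.mulLeftRight 𝕂 A).isBoundedBilinearMap
    have h2 : ContDiffOn 𝕂 n (fun x : A => (Ring.inverse x, Ring.inverse x)) {a : A | IsUnit a} :=
      ContDiffOn.prodMk ih ih
    have h3 := (hB.contDiff (n := n)).comp_contDiffOn h2
    exact h3.neg
end

section
/- Let K be a local field, i.e. a non-discrete, nontrivially normed field whose norm is nonarchimedean (‖x + y‖ ≤ max(‖x‖, ‖y‖)) and which is locally compact. Let d ≥ 1 and let M be a σ-compact Hausdorff topological space such that every point of M has an open neighbourhood homeomorphic to an open subset of K^d (K^d = Fin d → K with the supremum norm). Then M is homeomorphic to an open subset of K^d. -/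
open Set Topology Metric in
theorem stmt7_chart {E M : Type*} [NormedAddCommGroup E] [IsUltrametricDist E] [ProperSpace E]
    [TopologicalSpace M] (x : M) (V : Set M) (W : Set E) (hx : x ∈ V) (hV : IsOpen V)
    (hW : IsOpen W) (h : V ≃ₜ W) :
    ∃ (C : Set M) (f : M → E), x ∈ C ∧ IsOpen C ∧ IsCompact C ∧ ContinuousOn f C ∧ InjOn f C ∧
      ∀ O, IsOpen O → O ⊆ C → IsOpen (f '' O) := by
  classical
  have hφ : IsOpenEmbedding (fun v : V => (h v : E)) :=
    hW.isOpenEmbedding_subtypeVal.comp h.isOpenEmbedding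
  set f : M → E := fun y => if hy : y ∈ V then (h ⟨y, hy⟩ : E) else 0 with hf
  have hfV : ∀ v : V, f v = h v := by
    intro v; simp [hf]
  have hr : V.domRestrict f = fun v : V => (h v : E) := funext hfV
  obtain ⟨ε, hε, hεW⟩ := Metric.nhds_basis_closedBall.mem_iff.1 (hW.mem_nhds (h ⟨x, hx⟩).2)
  set B := closedBall (h ⟨x, hx⟩ : E) ε
  have hBo : IsOpen B := (IsUltrametricDist.isClopen_closedBall _ hε.ne').2
  have hBc : IsCompact B := isCompact_closedBall _ _
  have hCV : (Subtype.val '' ((fun v : V => (h v : E)) ⁻¹' B) : Set M) ⊆ V := by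
    rintro _ ⟨v, -, rfl⟩; exact v.2
  have hcV : ContinuousOn f V := by
    rw [continuousOn_iff_continuous_domRestrict, hr]; exact hφ.continuous
  have hiV : InjOn f V := by
    rw [injOn_iff_injective, hr]; exact hφ.injective
  refine ⟨Subtype.val '' ((fun v : V => (h v : E)) ⁻¹' B), f, ?_, ?_, ?_, hcV.mono hCV,
    hiV.mono hCV, ?_⟩
  · exact ⟨⟨x, hx⟩, mem_closedBall_self hε.le, rfl⟩
  · exact hV.isOpenMap_subtype_val _ (hBo.preimage hφ.continuous)
  · refine IsCompact.image ?_ continuous_subtype_val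
    refine (hφ.isInducing.isCompact_preimage_iff ?_).2 hBc
    intro b hb
    exact ⟨h.symm ⟨b, hεW hb⟩, by simp⟩
  · intro O hO hOC
    have : f '' O = (fun v : V => (h v : E)) '' (Subtype.val ⁻¹' O) := by
      rw [← hr, domRestrict_eq, image_comp, Subtype.image_preimage_coe,
        inter_eq_self_of_subset_right (hOC.trans hCV)]
    rw [this]
    exact hφ.isOpenMap _ (hO.preimage continuous_subtype_val)

open Set Topology Metric in
theorem stmt7 {K : Type*} [NontriviallyNormedField K] [IsUltrametricDist K]
    [LocallyCompactSpace K] {d : ℕ} (hd : 1 ≤ d)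
    {M : Type*} [TopologicalSpace M] [T2Space M] [SigmaCompactSpace M]
    (hloc : ∀ x : M, ∃ (V : Set M) (W : Set (Fin d → K)),
      x ∈ V ∧ IsOpen V ∧ IsOpen W ∧ Nonempty (V ≃ₜ W)) :
    ∃ U : Set (Fin d → K), IsOpen U ∧ Nonempty (M ≃ₜ U) := by
  classical
  have : ProperSpace K := ProperSpace.of_locallyCompactSpace K
  have : Nonempty (Fin d) := ⟨⟨0, hd⟩⟩
  suffices H : ∃ g : M → (Fin d → K), IsOpenEmbedding g by
    obtain ⟨g, hg⟩ := H
    exact ⟨range g, hg.isOpen_range, ⟨hg.isEmbedding.toHomeomorph⟩⟩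
  have hch : ∀ x : M, ∃ (C : Set M) (f : M → (Fin d → K)), x ∈ C ∧ IsOpen C ∧ IsCompact C ∧
      ContinuousOn f C ∧ InjOn f C ∧ ∀ O, IsOpen O → O ⊆ C → IsOpen (f '' O) := by
    intro x
    obtain ⟨V, W, hx, hV, hW, ⟨h⟩⟩ := hloc x
    exact stmt7_chart x V W hx hV hW h
  rcases isEmpty_or_nonempty M with hM | ⟨⟨x0⟩⟩
  · refine ⟨fun x => isEmptyElim x, ?_⟩
    refine IsOpenEmbedding.of_continuous_injective_isOpenMap (continuous_of_const fun x => isEmptyElim x)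
      (fun x => isEmptyElim x) ?_
    intro O _
    rw [Set.eq_empty_of_isEmpty O, image_empty]
    exact isOpen_empty
  choose C₀ f₀ hmem hop hcp hco hinj hopen using hch
  obtain ⟨s, hs, hsU⟩ := countable_cover_nhds_of_sigmaCompact
    (fun x => (hop x).mem_nhds (hmem x))
  have hsne : s.Nonempty := by
    have : x0 ∈ ⋃ x ∈ s, C₀ x := by rw [hsU]; trivial
    simp only [mem_iUnion] at this
    obtain ⟨y, hy, -⟩ := this
    exact ⟨y, hy⟩
  obtain ⟨e, rfl⟩ := hs.exists_eq_range hsne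
  have hcov : ∀ x, ∃ n, x ∈ C₀ (e n) := by
    intro x
    have : x ∈ ⋃ x ∈ range e, C₀ x := by rw [hsU]; trivial
    simpa using this
  let N : M → ℕ := fun x => Nat.find (hcov x)
  have hN : ∀ x, x ∈ C₀ (e (N x)) := fun x => Nat.find_spec (hcov x)
  have hNo : ∀ n, IsOpen {x | N x = n} := by
    intro n
    have : {x | N x = n} = C₀ (e n) ∩ ⋂ k ∈ Iio n, (C₀ (e k))ᶜ := by
      ext x
      simp [N, Nat.find_eq_iff]
    rw [this]
    exact (hop _).inter ((finite_Iio n).isOpen_biInter fun k _ => (hcp _).isClosed.isOpen_compl)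
  obtain ⟨p, hp⟩ := NormedField.exists_one_lt_norm K
  have hp0 : p ≠ 0 := by rintro rfl; simp at hp; linarith
  -- scaling
  have hsc : ∀ n, ∃ c : K, c ≠ 0 ∧ ∀ y ∈ C₀ (e n), ‖c • f₀ (e n) y‖ < 1 := by
    intro n
    obtain ⟨R, hR⟩ := ((hcp (e n)).image_of_continuousOn (hco (e n))).isBounded.exists_norm_le
    obtain ⟨c, hc0, hc⟩ := NormedField.exists_norm_lt K (r := (|R| + 1)⁻¹) (by positivity)
    refine ⟨c, norm_pos_iff.1 hc0, fun y hy => ?_⟩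
    have h1 := hR _ (mem_image_of_mem _ hy)
    rw [norm_smul]
    have h2 : ‖f₀ (e n) y‖ < |R| + 1 := by linarith [le_abs_self R]
    have h3 : (0:ℝ) < |R| + 1 := by positivity
    calc ‖c‖ * ‖f₀ (e n) y‖ ≤ ‖c‖ * (|R| + 1) := by gcongr
      _ < (|R| + 1)⁻¹ * (|R| + 1) := by gcongr
      _ = 1 := inv_mul_cancel₀ h3.ne'
  choose c hc0 hc using hsc
  let a : ℕ → (Fin d → K) := fun n _ => p ^ n
  have ha : ∀ m n, m < n → 1 ≤ ‖a m - a n‖ := by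
    intro m n hmn
    have hlt : ‖p ^ m‖ < ‖p ^ n‖ := by
      rw [norm_pow, norm_pow]; exact pow_lt_pow_right₀ hp hmn
    have h1 : ‖p ^ m - p ^ n‖ = ‖p ^ n‖ := by
      rw [sub_eq_add_neg, IsUltrametricDist.norm_add_eq_max_of_norm_ne_norm
        (by rw [norm_neg]; exact hlt.ne), norm_neg, max_eq_right hlt.le]
    have h2 : a m - a n = fun _ => p ^ m - p ^ n := rfl
    rw [h2, pi_norm_const, h1, norm_pow]
    exact one_le_pow₀ hp.le
  let G : ℕ → M → (Fin d → K) := fun n x => a n + c n • f₀ (e n) x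
  have hGa : ∀ x, ‖G (N x) x - a (N x)‖ < 1 := by
    intro x
    simpa [G] using hc (N x) x (hN x)
  have hne : ∀ x y, G (N x) x = G (N y) y → ¬ N x < N y := by
    intro x y hxy hlt
    have h1 := ha _ _ hlt
    have h2 : a (N x) - a (N y) = (G (N y) y - a (N y)) - (G (N x) x - a (N x)) := by
      rw [hxy]; abel
    rw [h2, sub_eq_add_neg] at h1
    exact absurd h1 (not_le.2 ((IsUltrametricDist.norm_add_le_max _ _).trans_lt
      (max_lt (hGa y) (by rw [norm_neg]; exact hGa x))))
  refine ⟨fun x => G (N x) x, IsOpenEmbedding.of_continuous_injective_isOpenMap ?_ ?_ ?_⟩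
  · rw [continuous_iff_continuousAt]
    intro x
    have h1 : ContinuousAt (G (N x)) x :=
      continuousAt_const.add (((hco _).continuousAt ((hop _).mem_nhds (hN x))).const_smul (c (N x)))
    refine h1.congr ?_
    filter_upwards [(hNo (N x)).mem_nhds rfl] with y hy
    rw [show N y = N x from hy]
  · intro x y hxy
    have hxy' : G (N x) x = G (N y) y := hxy
    have h : N x = N y := le_antisymm (not_lt.1 (hne y x hxy'.symm)) (not_lt.1 (hne x y hxy'))
    have hy := hN y
    rw [← h] at hxy' hy
    exact hinj _ (hN x) hy (smul_right_injective _ (hc0 _) (add_left_cancel hxy'))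
  · intro O hO
    have : (fun x => G (N x) x) '' O =
        ⋃ n, (fun z => a n + c n • z) '' (f₀ (e n) '' (O ∩ {x | N x = n})) := by
      ext z
      simp only [mem_image, mem_iUnion]
      constructor
      · rintro ⟨x, hx, rfl⟩
        exact ⟨N x, _, ⟨x, ⟨hx, rfl⟩, rfl⟩, rfl⟩
      · rintro ⟨n, _, ⟨x, ⟨hx, rfl⟩, rfl⟩, rfl⟩
        exact ⟨x, hx, rfl⟩
    rw [this]
    refine isOpen_iUnion fun n => ?_
    refine ((isOpenMap_add_left (a n)).comp (isOpenMap_smul₀ (hc0 n))) _ ?_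
    refine hopen _ _ (hO.inter (hNo n)) ?_
    rintro x ⟨-, rfl⟩
    exact hN x
end

section
/- Let K be a local field, i.e. a non-discrete, nontrivially normed field whose norm is nonarchimedean (‖x + y‖ ≤ max(‖x‖, ‖y‖)) and which is locally compact. Let d ≥ 1 and let M be a paracompact Hausdorff topological space such that every point of M has an open neighbourhood homeomorphic to an open subset of K^d (K^d = Fin d → K with the supremum norm). Then there exists a family (B_i)_{i∈ι} of pairwise disjoint, compact open subsets of M whose union is M, such that each B_i is homeomorphic to the closed unit ball O^d = {x ∈ K^d : ‖x‖ ≤ 1}. -/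
open Set Topology in
/-- Charts as open partial homeomorphisms. -/
theorem stmt8_chart {M : Type*} {E : Type*} [TopologicalSpace M] [TopologicalSpace E]
    {V : Set M} {W : Set E} {x : M} (hx : x ∈ V) (hV : IsOpen V) (hW : IsOpen W)
    (e : V ≃ₜ W) : ∃ φ : OpenPartialHomeomorph M E, x ∈ φ.source := by
  haveI : Nonempty V := ⟨⟨x, hx⟩⟩
  have h1 : IsOpenEmbedding (Subtype.val : V → M) := hV.isOpenEmbedding_subtypeVal
  have h2 : IsOpenEmbedding (Subtype.val ∘ e : V → E) :=
    hW.isOpenEmbedding_subtypeVal.comp e.isOpenEmbedding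
  refine ⟨(h1.toOpenPartialHomeomorph _).symm.trans (h2.toOpenPartialHomeomorph _), ?_⟩
  simp [OpenPartialHomeomorph.trans_source, hx]

open Set Topology in
/-- Disjoint compact open partition subordinate to an open cover. -/
theorem stmt8_partition {M : Type*} [TopologicalSpace M] [T2Space M] [ParacompactSpace M]
    (hb : ∀ (x : M) (V : Set M), IsOpen V → x ∈ V → ∃ D, IsCompact D ∧ IsOpen D ∧ x ∈ D ∧ D ⊆ V)
    (u : M → Set M) (huo : ∀ x, IsOpen (u x)) (hux : ∀ x, x ∈ u x) :
    ∃ E : M → Set M, Pairwise (Function.onFun Disjoint E) ∧ (∀ i, IsCompact (E i)) ∧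
      (∀ i, IsOpen (E i)) ∧ (⋃ i, E i) = univ ∧ ∀ i, E i ⊆ u i := by
  choose k hkc hko hkx hku using fun x => hb x (u x) (huo x) (hux x)
  obtain ⟨v, hvo, hvU, hvf, hvk⟩ := precise_refinement k hko
    (eq_univ_of_forall fun x => mem_iUnion.2 ⟨x, hkx x⟩)
  obtain ⟨C, hCU, hCc, hCv⟩ := exists_iUnion_eq_closed_subset hvo hvf.point_finite hvU
  have hD : ∀ i, ∃ D, IsCompact D ∧ IsOpen D ∧ C i ⊆ D ∧ D ⊆ v i := by
    intro i
    have hc : IsCompact (C i) := (hkc i).of_isClosed_subset (hCc i) ((hCv i).trans (hvk i))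
    have := hc.induction_on (p := fun s => ∃ D, IsCompact D ∧ IsOpen D ∧ s ⊆ D ∧ D ⊆ v i)
      ⟨∅, isCompact_empty, isOpen_empty, subset_rfl, empty_subset _⟩
      (fun s t hst ⟨D, h1, h2, h3, h4⟩ => ⟨D, h1, h2, hst.trans h3, h4⟩)
      (fun s t ⟨D, h1, h2, h3, h4⟩ ⟨D', h1', h2', h3', h4'⟩ =>
        ⟨D ∪ D', h1.union h1', h2.union h2', union_subset_union h3 h3', union_subset h4 h4'⟩)
      (fun x hx => by
        obtain ⟨D, h1, h2, h3, h4⟩ := hb x (v i) (hvo i) (hCv i hx)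
        exact ⟨D, mem_nhdsWithin_of_mem_nhds (h2.mem_nhds h3), D, h1, h2, subset_rfl, h4⟩)
    exact this
  choose D hDc hDo hCD hDv using hD
  have hDf : LocallyFinite D := hvf.subset hDv
  let r : M → M → Prop := WellOrderingRel
  have hcl : ∀ i, IsClosed (⋃ j : {j // r j i}, D j) := fun i =>
    (hDf.comp_injective Subtype.val_injective).isClosed_iUnion fun j => (hDc j).isClosed
  refine ⟨fun i => D i \ ⋃ j : {j // r j i}, D j, ?_, fun i => ?_, fun i => ?_, ?_, fun i => ?_⟩
  · have key : ∀ i j, r i j → Disjoint (D i \ ⋃ l : {l // r l i}, D l)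
        (D j \ ⋃ l : {l // r l j}, D l) := by
      intro i j hij
      refine Set.disjoint_left.2 fun x hx hx' => hx'.2 (mem_iUnion.2 ⟨⟨i, hij⟩, hx.1⟩)
    intro i j hij
    rcases trichotomous_of r i j with h | h | h
    · exact key i j h
    · exact absurd h hij
    · exact (key j i h).symm
  · exact (hDc i).diff (isOpen_iUnion fun j => hDo j)
  · exact (hDo i).sdiff (hcl i)
  · refine eq_univ_of_forall fun x => ?_
    have hne : {i | x ∈ D i}.Nonempty := by
      have : x ∈ ⋃ i, C i := hCU ▸ mem_univ x
      obtain ⟨i, hi⟩ := mem_iUnion.1 this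
      exact ⟨i, hCD i hi⟩
    have wf : WellFounded r := WellOrderingRel.isWellOrder.wf
    refine mem_iUnion.2 ⟨wf.min _ hne, wf.min_mem _ hne, ?_⟩
    rintro h
    obtain ⟨⟨j, hj⟩, hxj⟩ := mem_iUnion.1 h
    exact wf.not_lt_min {i | x ∈ D i} hxj hj
  · exact sdiff_subset.trans ((hDv i).trans ((hvk i).trans (hku i)))

open Set Topology in
/-- A ball of radius `‖c‖` is homeomorphic to the unit ball. -/
theorem stmt8_ball {K : Type*} [NontriviallyNormedField K] {d : ℕ} (a : Fin d → K) {c : K}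
    (hc : c ≠ 0) : Nonempty (Metric.closedBall a ‖c‖ ≃ₜ
      (Metric.closedBall (0 : Fin d → K) 1 : Set (Fin d → K))) := by
  let h : (Fin d → K) ≃ₜ (Fin d → K) := (Homeomorph.smulOfNeZero c hc).trans (Homeomorph.addLeft a)
  refine ⟨((h.image _).trans (Homeomorph.setCongr ?_)).symm⟩
  have : (h : (Fin d → K) → (Fin d → K)) = (fun y => a + y) ∘ (fun y => c • y) := rfl
  rw [this, image_comp, image_smul, smul_closedBall' hc]
  simp

open Set Topology in
theorem stmt8 {K : Type*} [NontriviallyNormedField K] [IsUltrametricDist K]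
    [LocallyCompactSpace K] {d : ℕ} (hd : 1 ≤ d)
    {M : Type u} [TopologicalSpace M] [T2Space M] [ParacompactSpace M]
    (hloc : ∀ x : M, ∃ (V : Set M) (W : Set (Fin d → K)),
      x ∈ V ∧ IsOpen V ∧ IsOpen W ∧ Nonempty (V ≃ₜ W)) :
    ∃ (ι : Type u) (B : ι → Set M),
      Pairwise (Function.onFun Disjoint B) ∧
      (∀ i, IsCompact (B i)) ∧ (∀ i, IsOpen (B i)) ∧ (⋃ i, B i) = Set.univ ∧
      ∀ i, Nonempty (B i ≃ₜ (Metric.closedBall (0 : Fin d → K) 1 : Set (Fin d → K))) := by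
  haveI : ProperSpace K := ProperSpace.of_locallyCompactSpace K
  have hch : ∀ x : M, ∃ φ : OpenPartialHomeomorph M (Fin d → K), x ∈ φ.source := by
    intro x
    obtain ⟨V, W, hx, hV, hW, ⟨e⟩⟩ := hloc x
    exact stmt8_chart hx hV hW e
  choose φ hφ using hch
  have hop : ∀ (a : Fin d → K) (c : K), c ≠ 0 → IsOpen (Metric.closedBall a ‖c‖) := fun a c hc =>
    IsUltrametricDist.isOpen_closedBall a (norm_ne_zero_iff.2 hc)
  -- pulled back balls
  have hpull : ∀ (ψ : OpenPartialHomeomorph M (Fin d → K)) (a : Fin d → K) (c : K), c ≠ 0 →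
      Metric.closedBall a ‖c‖ ⊆ ψ.target →
      IsCompact (ψ.symm '' Metric.closedBall a ‖c‖) ∧ IsOpen (ψ.symm '' Metric.closedBall a ‖c‖) :=
    fun ψ a c hc h => ⟨(isCompact_closedBall a _).image_of_continuousOn (ψ.continuousOn_symm.mono h),
      ψ.symm.isOpen_image_of_subset_source (hop a c hc) h⟩
  have hb : ∀ (x : M) (V : Set M), IsOpen V → x ∈ V →
      ∃ D, IsCompact D ∧ IsOpen D ∧ x ∈ D ∧ D ⊆ V := by
    intro x V hV hx
    have ho : IsOpen ((φ x).target ∩ (φ x).symm ⁻¹' V) := (φ x).isOpen_inter_preimage_symm hV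
    obtain ⟨ε, hε, hball⟩ := Metric.isOpen_iff.1 ho (φ x x)
      ⟨(φ x).map_source (hφ x), by simpa [(φ x).left_inv (hφ x)] using hx⟩
    obtain ⟨c, hc0, hcε⟩ := NormedField.exists_norm_lt K hε
    have hsub := (Metric.closedBall_subset_ball hcε).trans hball
    have := hpull (φ x) (φ x x) c (norm_pos_iff.1 hc0) (hsub.trans inter_subset_left)
    refine ⟨_, this.1, this.2, ⟨φ x x, Metric.mem_closedBall_self (norm_nonneg _),
      (φ x).left_inv (hφ x)⟩, ?_⟩
    rintro _ ⟨y, hy, rfl⟩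
    exact (hsub hy).2
  obtain ⟨E, hEd, hEc, hEo, hEU, hEs⟩ := stmt8_partition hb (fun x => (φ x).source)
    (fun x => (φ x).open_source) hφ
  have hc : ∀ i, ∃ c : K, c ≠ 0 ∧ ∀ x ∈ E i, Metric.closedBall (φ i x) ‖c‖ ⊆ φ i '' E i := by
    intro i
    have h1 : IsCompact (φ i '' E i) :=
      (hEc i).image_of_continuousOn ((φ i).continuousOn.mono (hEs i))
    have h2 : IsOpen (φ i '' E i) := (φ i).isOpen_image_of_subset_source (hEo i) (hEs i)
    obtain ⟨δ, hδ, hsub⟩ := h1.exists_thickening_subset_open h2 subset_rfl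
    obtain ⟨c, hc0, hcε⟩ := NormedField.exists_norm_lt K hδ
    refine ⟨c, norm_pos_iff.1 hc0, fun x hx => ?_⟩
    exact (Metric.closedBall_subset_ball hcε).trans
      ((Metric.ball_subset_thickening (mem_image_of_mem _ hx) δ).trans hsub)
  choose c hc0 hcE using hc
  have htar : ∀ i, φ i '' E i ⊆ (φ i).target := by
    rintro i _ ⟨y, hy, rfl⟩
    exact (φ i).map_source (hEs i hy)
  have hBE : ∀ i, ∀ x ∈ E i, (φ i).symm '' Metric.closedBall (φ i x) ‖c i‖ ⊆ E i := by
    rintro i x hx _ ⟨y, hy, rfl⟩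
    obtain ⟨z, hz, rfl⟩ := hcE i x hx hy
    rwa [(φ i).left_inv (hEs i hz)]
  refine ⟨{S : Set M // ∃ i, ∃ x ∈ E i, S = (φ i).symm '' Metric.closedBall (φ i x) ‖c i‖},
    Subtype.val, ?_, ?_, ?_, ?_, ?_⟩
  · rintro ⟨_, i, x, hx, rfl⟩ ⟨_, j, y, hy, rfl⟩ hne
    change Disjoint ((φ i).symm '' _) ((φ j).symm '' _)
    by_cases hij : i = j
    · subst hij
      rcases IsUltrametricDist.closedBall_eq_or_disjoint (φ i x) (φ i y) ‖c i‖ with h | h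
      · exact absurd (Subtype.ext (by simp only [h])) hne
      · exact h.image ((φ i).symm.injOn) ((hcE i x hx).trans (htar i))
          ((hcE i y hy).trans (htar i))
    · exact (hEd hij).mono (hBE i x hx) (hBE j y hy)
  · rintro ⟨_, i, x, hx, rfl⟩
    exact (hpull (φ i) _ _ (hc0 i) ((hcE i x hx).trans (htar i))).1
  · rintro ⟨_, i, x, hx, rfl⟩
    exact (hpull (φ i) _ _ (hc0 i) ((hcE i x hx).trans (htar i))).2
  · refine eq_univ_of_forall fun x => ?_
    have : x ∈ ⋃ i, E i := hEU ▸ mem_univ x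
    obtain ⟨i, hi⟩ := mem_iUnion.1 this
    exact mem_iUnion.2 ⟨⟨_, i, x, hi, rfl⟩, φ i x, Metric.mem_closedBall_self (norm_nonneg _),
      (φ i).left_inv (hEs i hi)⟩
  · rintro ⟨_, i, x, hx, rfl⟩
    obtain ⟨g⟩ := stmt8_ball (φ i x) (hc0 i)
    exact ⟨((φ i).symm.homeomorphOfImageSubsetSource ((hcE i x hx).trans (htar i)) rfl).symm.trans g⟩
end

section
/- Let K be a local field, i.e. a non-discrete, nontrivially normed field whose norm is nonarchimedean and which is locally compact, let d ∈ ℕ, and let R ⊆ K^d (with the supremum norm) be a compact open subset. Then there exist ε > 0 with R + B(0, ε) ⊆ R, a natural number m, and points a_1, …, a_m ∈ R such that the open balls B(a_1, ε), …, B(a_m, ε) are pairwise disjoint and R = B(a_1, ε) ∪ … ∪ B(a_m, ε). (If R = ∅, take m = 0.) -/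
open Pointwise in
theorem stmt9 {K : Type*} [NontriviallyNormedField K] [IsUltrametricDist K]
    [LocallyCompactSpace K] {d : ℕ} {R : Set (Fin d → K)}
    (hRc : IsCompact R) (hRo : IsOpen R) :
    ∃ ε > (0 : ℝ), R + Metric.ball (0 : Fin d → K) ε ⊆ R ∧
      ∃ (m : ℕ) (a : Fin m → (Fin d → K)),
        (∀ i, a i ∈ R) ∧
        Pairwise (Function.onFun Disjoint (fun i => Metric.ball (a i) ε)) ∧
        R = ⋃ i, Metric.ball (a i) ε := by
  obtain ⟨ε, hε, hsub⟩ := hRc.exists_thickening_subset_open hRo subset_rfl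
  have hball : ∀ x ∈ R, Metric.ball x ε ⊆ R := fun x hx y hy =>
    hsub (Metric.mem_thickening_iff.2 ⟨x, hx, hy⟩)
  refine ⟨ε, hε, ?_, ?_⟩
  · rintro _ ⟨x, hx, y, hy, rfl⟩
    refine hball x hx ?_
    simpa [Metric.mem_ball, dist_eq_norm] using hy
  obtain ⟨t, htR, htf, hcov⟩ := hRc.finite_cover_balls hε
  have hSf : ((fun x => Metric.ball x ε) '' t).Finite := htf.image _
  have : Finite ((fun x => Metric.ball x ε) '' t) := hSf
  obtain ⟨m, ⟨e⟩⟩ := Finite.exists_equiv_fin ((fun x => Metric.ball x ε) '' t)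
  choose a hat ha using fun i : Fin m => (e.symm i).2
  refine ⟨m, a, fun i => htR (hat i), ?_, ?_⟩
  · intro i j hij
    rcases IsUltrametricDist.ball_eq_or_disjoint (a i) (a j) ε with h | h
    · exact absurd (e.symm.injective (Subtype.ext ((ha i).symm.trans (h.trans (ha j))))) hij
    · exact h
  · apply Set.Subset.antisymm
    · intro x hx
      obtain ⟨y, hy, hxy⟩ := Set.mem_iUnion₂.1 (hcov hx)
      refine Set.mem_iUnion.2 ⟨e ⟨_, y, hy, rfl⟩, ?_⟩
      have h := ha (e ⟨_, y, hy, rfl⟩)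
      simp only [Equiv.symm_apply_apply] at h
      rw [h]
      exact hxy
    · exact Set.iUnion_subset fun i => hball _ (htR (hat i))
end

section
/- Let K be a local field, i.e. a non-discrete, nontrivially normed field whose norm is nonarchimedean and which is locally compact, let d ≥ 1, let U ⊆ K^d (supremum norm) be a non-empty open subset, and let (U_i)_{i∈ι} be a family of open sets covering U. Then there exist a countable index set J, points a_j ∈ U and radii r_j > 0 for j ∈ J, such that: (i) the open balls B(a_j, r_j), j ∈ J, are pairwise disjoint; (ii) their union equals U; and (iii) the cover is subordinate to (U_i): for every j ∈ J there exists i(j) ∈ ι with B(a_j, r_j) ⊆ U_{i(j)}. -/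
theorem stmt10 {K : Type*} [NontriviallyNormedField K] [IsUltrametricDist K]
    [LocallyCompactSpace K] {d : ℕ} (hd : 1 ≤ d)
    {U : Set (Fin d → K)} (hUo : IsOpen U) (hUne : U.Nonempty)
    {ι : Type*} (V : ι → Set (Fin d → K)) (hVo : ∀ i, IsOpen (V i))
    (hcov : U ⊆ ⋃ i, V i) :
    ∃ (J : Type) (_ : Countable J) (a : J → (Fin d → K)) (r : J → ℝ),
      (∀ j, 0 < r j) ∧ (∀ j, a j ∈ U) ∧
      Pairwise (Function.onFun Disjoint (fun j => Metric.ball (a j) (r j))) ∧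
      (⋃ j, Metric.ball (a j) (r j)) = U ∧
      ∀ j, ∃ i, Metric.ball (a j) (r j) ⊆ V i := by
  classical
  haveI : ProperSpace K := ProperSpace.of_locallyCompactSpace K
  let ρ : ℕ → ℝ := fun n => 1 / ((n : ℝ) + 1)
  have hρ : ∀ n, 0 < ρ n := fun n => Nat.one_div_pos_of_nat
  let P : (Fin d → K) → ℕ → Prop := fun x n =>
    Metric.ball x (ρ n) ⊆ U ∧ ∃ i, Metric.ball x (ρ n) ⊆ V i
  have hex : ∀ x : U, ∃ n, P x n := by
    rintro ⟨x, hx⟩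
    obtain ⟨i, hi⟩ := Set.mem_iUnion.1 (hcov hx)
    obtain ⟨ε, hε, hb⟩ := Metric.isOpen_iff.1 (hUo.inter (hVo i)) x ⟨hx, hi⟩
    obtain ⟨n, hn⟩ := exists_nat_one_div_lt hε
    have h := (Metric.ball_subset_ball (x := x) hn.le).trans hb
    exact ⟨n, h.trans Set.inter_subset_left, i, h.trans Set.inter_subset_right⟩
  let N : U → ℕ := fun x => Nat.find (hex x)
  have hN : ∀ x : U, P x (N x) := fun x => Nat.find_spec (hex x)
  let B : U → Set (Fin d → K) := fun x => Metric.ball x (ρ (N x))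
  have hself : ∀ x : U, (x : Fin d → K) ∈ B x := fun x => Metric.mem_ball_self (hρ _)
  have key : ∀ x y : U, N x ≤ N y → ¬ Disjoint (B x) (B y) → B x = B y := by
    intro x y hxy hnd
    obtain ⟨z, hzx, hzy⟩ := Set.not_disjoint_iff.1 hnd
    have hle : ρ (N y) ≤ ρ (N x) := Nat.one_div_le_one_div hxy
    have h1 : Metric.ball (x : Fin d → K) (ρ (N x)) = Metric.ball z (ρ (N x)) :=
      IsUltrametricDist.ball_eq_of_mem hzx
    have h2 : Metric.ball (y : Fin d → K) (ρ (N x)) = Metric.ball z (ρ (N x)) :=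
      IsUltrametricDist.ball_eq_of_mem (Metric.ball_subset_ball hle hzy)
    have h3 := h1.trans h2.symm
    have h4 : P y (N x) := by
      have := hN x
      simp only [P] at this ⊢
      rwa [h3] at this
    have h5 : N y = N x := le_antisymm (Nat.find_min' (hex y) h4) hxy
    simp only [B]
    rw [h5, h3]
  have key' : ∀ x y : U, B x ≠ B y → Disjoint (B x) (B y) := by
    intro x y hne
    by_contra hnd
    rcases le_total (N x) (N y) with h | h
    · exact hne (key x y h hnd)
    · exact hne (key y x h (fun h' => hnd h'.symm)).symm
  have hc : (Set.range B).Countable := by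
    refine Set.PairwiseDisjoint.countable_of_isOpen (s := id) ?_ ?_ ?_
    · rintro _ ⟨x, rfl⟩ _ ⟨y, rfl⟩ hne
      exact key' x y hne
    · rintro _ ⟨x, rfl⟩
      exact Metric.isOpen_ball
    · rintro _ ⟨x, rfl⟩
      exact ⟨x, hself x⟩
  haveI := hc.to_subtype
  obtain ⟨f, hf⟩ := exists_injective_nat (Set.range B)
  let e := Equiv.ofInjective f hf
  choose c hcB using fun s : Set.range B => s.2
  refine ⟨Set.range f, inferInstance, fun j => c (e.symm j), fun j => ρ (N (c (e.symm j))),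
    fun j => hρ _, fun j => (c _).2, ?_, ?_, fun j => (hN _).2⟩
  · intro j k hjk
    refine key' _ _ fun h => hjk ?_
    rw [hcB, hcB] at h
    exact e.symm.injective (Subtype.ext h)
  · apply Set.Subset.antisymm
    · exact Set.iUnion_subset fun j => (hN _).1
    · intro x hx
      refine Set.mem_iUnion.2 ⟨e ⟨B ⟨x, hx⟩, _, rfl⟩, ?_⟩
      change x ∈ B (c (e.symm (e _)))
      rw [hcB, e.symm_apply_apply]
      exact hself ⟨x, hx⟩
end

section
/- Let K be a local field, i.e. a non-discrete, nontrivially normed field whose norm is nonarchimedean and which is locally compact, let d ∈ ℕ, and let M be a σ-compact Hausdorff topological space such that every point of M has an open neighbourhood homeomorphic to an open subset of K^d. Let (U_i)_{i∈ι} be an open cover of M. Then there exists a family (V_i)_{i∈ι} of pairwise disjoint open-and-closed subsets of M with V_i ⊆ U_i for every i ∈ ι and ⋃_{i∈ι} V_i = M. Equivalently, the indicator functions h_i = 1_{V_i} : M → K form a partition of unity subordinate to (U_i) consisting of continuous {0,1}-valued (hence locally constant) functions with supp h_i ⊆ U_i. -/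
theorem stmt12 {K : Type*} [NontriviallyNormedField K] [IsUltrametricDist K]
    [LocallyCompactSpace K] {d : ℕ}
    {M : Type*} [TopologicalSpace M] [T2Space M] [SigmaCompactSpace M]
    (hloc : ∀ x : M, ∃ (V : Set M) (W : Set (Fin d → K)),
      x ∈ V ∧ IsOpen V ∧ IsOpen W ∧ Nonempty (V ≃ₜ W))
    {ι : Type*} (U : ι → Set M) (hUo : ∀ i, IsOpen (U i))
    (hUcov : (⋃ i, U i) = Set.univ) :
    ∃ V : ι → Set M,
      Pairwise (Function.onFun Disjoint V) ∧
      (∀ i, IsOpen (V i)) ∧ (∀ i, IsClosed (V i)) ∧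
      (∀ i, V i ⊆ U i) ∧ (⋃ i, V i) = Set.univ ∧
      (∀ i, Continuous ((V i).indicator fun _ => (1 : K))) ∧
      (∀ i, tsupport ((V i).indicator fun _ => (1 : K)) ⊆ U i) := by
  classical
  have key : ∀ x : M, ∃ (i : ι) (C : Set M), x ∈ C ∧ IsClopen C ∧ C ⊆ U i := by
    intro x
    obtain ⟨i, hi⟩ : ∃ i, x ∈ U i := by
      have : x ∈ ⋃ i, U i := hUcov ▸ Set.mem_univ x
      simpa using this
    obtain ⟨V, W, hxV, hV, hW, ⟨e⟩⟩ := hloc x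
    have : LocallyCompactSpace W := hW.locallyCompactSpace
    have : LocallyCompactSpace V := e.isOpenEmbedding.locallyCompactSpace
    have : TotallyDisconnectedSpace V :=
      e.symm.totallyDisconnectedSpace
    have hb := loc_compact_Haus_tot_disc_of_zero_dim (H := V)
    obtain ⟨Q, hQc, hQ⟩ := exists_compact_mem_nhds (⟨x, hxV⟩ : V)
    have hO : interior Q ∩ (Subtype.val ⁻¹' U i) ∈ nhds (⟨x, hxV⟩ : V) :=
      Filter.inter_mem (interior_mem_nhds.2 hQ)
        (((hUo i).preimage continuous_subtype_val).mem_nhds hi)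
    obtain ⟨C, hC, hxC, hCs⟩ := hb.mem_nhds_iff.1 hO
    have hCc : IsCompact C :=
      hQc.of_isClosed_subset hC.1 (fun y hy => interior_subset (hCs hy).1)
    refine ⟨i, Subtype.val '' C, ⟨_, hxC, rfl⟩,
      ⟨(hCc.image continuous_subtype_val).isClosed,
        hV.isOpenMap_subtype_val _ hC.2⟩, ?_⟩
    rintro _ ⟨y, hy, rfl⟩
    exact (hCs hy).2
  choose idx C hxC hC hCU using key
  have main : ∃ V : ι → Set M, Pairwise (Function.onFun Disjoint V) ∧
      (∀ i, IsClopen (V i)) ∧ (∀ i, V i ⊆ U i) ∧ (⋃ i, V i) = Set.univ := by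
    rcases isEmpty_or_nonempty M with hM | hM
    · exact ⟨fun _ => ∅, fun i j _ => by simp [Function.onFun], fun _ => isClopen_empty,
        fun _ => Set.empty_subset _, Subsingleton.elim _ _⟩
    obtain ⟨t, htc, ht⟩ := countable_cover_nhds_of_sigmaCompact
      (f := C) (fun x => (hC x).2.mem_nhds (hxC x))
    have htn : t.Nonempty := by
      obtain ⟨x⟩ := hM
      have : x ∈ ⋃ y ∈ t, C y := ht ▸ Set.mem_univ x
      obtain ⟨y, hy, -⟩ := Set.mem_iUnion₂.1 this
      exact ⟨y, hy⟩
    obtain ⟨f, rfl⟩ := htc.exists_eq_range htn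
    have hD : ∀ n, IsClopen (disjointed (fun n => C (f n)) n) := by
      intro n
      exact disjointedRec (p := IsClopen) (fun _ _ h => h.diff (hC _)) (hC _)
    have hdisj := disjoint_disjointed (fun n => C (f n))
    have hcov : (⋃ n, disjointed (fun n => C (f n)) n) = Set.univ := by
      rw [iUnion_disjointed, ← ht]
      simp
    have hle : ∀ n, disjointed (fun n => C (f n)) n ⊆ C (f n) :=
      fun n => disjointed_le _ n
    generalize disjointed (fun n => C (f n)) = D at *
    have hdj : ∀ m n x, x ∈ D m → x ∈ D n → m = n := by
      intro m n x hm hn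
      by_contra h
      exact Set.disjoint_left.1 (hdisj h) hm hn
    have hex : ∀ x, ∃ n, x ∈ D n := by
      intro x
      have : x ∈ ⋃ n, D n := hcov ▸ Set.mem_univ x
      simpa using this
    refine ⟨fun i => ⋃ n, ⋃ (_ : idx (f n) = i), D n, ?_, ?_, ?_, ?_⟩
    · intro i j hij
      refine Set.disjoint_left.2 ?_
      intro x hx hy
      simp only [Set.mem_iUnion] at hx hy
      obtain ⟨m, hm, hxm⟩ := hx
      obtain ⟨n, hn, hxn⟩ := hy
      have := hdj m n x hxm hxn
      subst this
      exact hij (hm.symm.trans hn)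
    · intro i
      refine ⟨?_, isOpen_iUnion fun n => isOpen_iUnion fun _ => (hD n).2⟩
      have : (⋃ n, ⋃ (_ : idx (f n) = i), D n) = (⋃ n, ⋃ (_ : idx (f n) ≠ i), D n)ᶜ := by
        ext x
        simp only [Set.mem_iUnion, Set.mem_compl_iff, not_exists]
        constructor
        · rintro ⟨m, hm, hxm⟩ n hn hxn
          have := hdj m n x hxm hxn
          subst this
          exact hn hm
        · intro h
          obtain ⟨n, hn⟩ := hex x
          by_cases hi : idx (f n) = i
          · exact ⟨n, hi, hn⟩
          · exact absurd hn (h n hi)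
      beta_reduce
      rw [this]
      exact (isOpen_iUnion fun n => isOpen_iUnion fun _ => (hD n).2).isClosed_compl
    · intro i
      refine Set.iUnion_subset fun n => Set.iUnion_subset fun hn => ?_
      subst hn
      exact (hle n).trans (hCU _)
    · refine Set.eq_univ_of_forall fun x => ?_
      obtain ⟨n, hn⟩ := hex x
      simp only [Set.mem_iUnion]
      exact ⟨_, n, rfl, hn⟩
  obtain ⟨V, h1, h2, h3, h4⟩ := main
  refine ⟨V, h1, fun i => (h2 i).2, fun i => (h2 i).1, h3, h4, fun i => ?_, fun i => ?_⟩
  · exact continuous_const.indicator (by simp [(h2 i).frontier_eq])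
  · refine (closure_minimal ?_ (h2 i).1).trans (h3 i)
    exact Set.support_indicator_subset
end

section
/- Let K be a complete, nonarchimedean, nontrivially normed field (‖x + y‖ ≤ max(‖x‖, ‖y‖)), let d ∈ ℕ, and let B = {x ∈ K^d : ‖x‖ ≤ 1} be the closed unit ball of K^d with the supremum norm. Let σ : B → K^d be a map with σ(B) ⊆ B, and suppose there is a constant c < 1 such that ‖σ(z) − σ(y)‖ ≤ c · ‖z − y‖ for all y, z ∈ B. Then the map γ : B → K^d, γ(x) = x + σ(x), is a bijection from B onto B which is an isometry: ‖γ(z) − γ(y)‖ = ‖z − y‖ for all y, z ∈ B. -/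
theorem stmt13 {K : Type*} [NontriviallyNormedField K] [CompleteSpace K]
    [IsUltrametricDist K] {d : ℕ}
    (σ : (Fin d → K) → (Fin d → K)) {c : ℝ} (hc : c < 1)
    (hmaps : ∀ x ∈ Metric.closedBall (0 : Fin d → K) 1,
      σ x ∈ Metric.closedBall (0 : Fin d → K) 1)
    (hlip : ∀ y ∈ Metric.closedBall (0 : Fin d → K) 1,
      ∀ z ∈ Metric.closedBall (0 : Fin d → K) 1, ‖σ z - σ y‖ ≤ c * ‖z - y‖) :
    Set.BijOn (fun x => x + σ x) (Metric.closedBall (0 : Fin d → K) 1)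
        (Metric.closedBall (0 : Fin d → K) 1) ∧
      ∀ y ∈ Metric.closedBall (0 : Fin d → K) 1,
        ∀ z ∈ Metric.closedBall (0 : Fin d → K) 1,
          ‖(z + σ z) - (y + σ y)‖ = ‖z - y‖ := by
  have hiso : ∀ y ∈ Metric.closedBall (0 : Fin d → K) 1,
        ∀ z ∈ Metric.closedBall (0 : Fin d → K) 1,
          ‖(z + σ z) - (y + σ y)‖ = ‖z - y‖ := by
    intro y hy z hz
    have h := hlip y hy z hz
    rcases eq_or_ne z y with rfl | hne
    · simp
    have hpos : 0 < ‖z - y‖ := norm_pos_iff.mpr (sub_ne_zero.mpr hne)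
    have hlt : ‖σ z - σ y‖ < ‖z - y‖ := by nlinarith
    have e : (z + σ z) - (y + σ y) = (z - y) + (σ z - σ y) := by abel
    apply le_antisymm
    · rw [e]
      exact (IsUltrametricDist.norm_add_le_max _ _).trans (max_le le_rfl hlt.le)
    · have e2 : z - y = ((z + σ z) - (y + σ y)) + -(σ z - σ y) := by abel
      have h2 := IsUltrametricDist.norm_add_le_max ((z + σ z) - (y + σ y)) (-(σ z - σ y))
      rw [← e2, norm_neg] at h2
      rcases le_max_iff.mp h2 with h3 | h3
      · exact h3
      · exact absurd h3 (not_le.mpr hlt)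
  refine ⟨⟨?_, ?_, ?_⟩, hiso⟩
  · intro x hx
    have h1 := hmaps x hx
    rw [mem_closedBall_zero_iff] at *
    exact (IsUltrametricDist.norm_add_le_max _ _).trans (max_le hx h1)
  · intro y hy z hz h
    have h1 := hiso y hy z hz
    have h2 : y + σ y = z + σ z := h
    rw [h2, sub_self, norm_zero] at h1
    exact (sub_eq_zero.mp (norm_eq_zero.mp h1.symm)).symm
  · intro b hb
    let f : (Fin d → K) → (Fin d → K) := fun x => b - σ x
    have hf : Set.MapsTo f (Metric.closedBall 0 1) (Metric.closedBall 0 1) := by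
      intro x hx
      have h1 := hmaps x hx
      rw [mem_closedBall_zero_iff] at *
      change ‖b - σ x‖ ≤ 1
      rw [sub_eq_add_neg]
      exact (IsUltrametricDist.norm_add_le_max _ _).trans (max_le hb (by rwa [norm_neg]))
    have hcon : ContractingWith c.toNNReal (hf.restrict f _ _) := by
      refine ⟨by simpa using hc, LipschitzWith.of_dist_le_mul ?_⟩
      rintro ⟨x, hx⟩ ⟨y, hy⟩
      change dist (b - σ x) (b - σ y) ≤ _ * dist x y
      rw [dist_sub_left, dist_eq_norm, dist_eq_norm]
      exact (hlip y hy x hx).trans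
        (mul_le_mul_of_nonneg_right (Real.le_coe_toNNReal c) (norm_nonneg _))
    obtain ⟨x, hx, hfx, -⟩ := ContractingWith.exists_fixedPoint'
      (Metric.isClosed_closedBall.isComplete) hf hcon
      (Metric.mem_closedBall_self zero_le_one) (edist_ne_top _ _)
    refine ⟨x, hx, ?_⟩
    have h : b - σ x = x := hfx
    change x + σ x = b
    nth_rewrite 1 [← h]
    exact sub_add_cancel _ _
end

section
/- Let E and F be real normed spaces and U ⊆ E an open subset. A map f : U → F is smooth (C^∞, i.e. ContDiffOn ℝ ⊤ f U) if and only if for every smooth curve c : ℝ → E with range contained in U, the composition f ∘ c : ℝ → F is smooth. -/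
namespace Boman
open Set Filter Topology
open scoped ContDiff
set_option linter.unusedSectionVars false

/-- Local form of smoothness along smooth curves. -/
def ArcSm {E F : Type*} [NormedAddCommGroup E] [NormedSpace ℝ E]
    [NormedAddCommGroup F] [NormedSpace ℝ F] (f : E → F) (U : Set E) : Prop :=
  ∀ c : ℝ → E, ContDiff ℝ ∞ c → ∀ t, c t ∈ U → ContDiffAt ℝ ∞ (f ∘ c) t

section basic
variable {E E' F F' : Type*} [NormedAddCommGroup E] [NormedSpace ℝ E]
  [NormedAddCommGroup E'] [NormedSpace ℝ E']
  [NormedAddCommGroup F] [NormedSpace ℝ F] [NormedAddCommGroup F'] [NormedSpace ℝ F']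

lemma exists_theta (s₀ δ : ℝ) (hδ : 0 < δ) : ∃ θ : ℝ → ℝ, ContDiff ℝ ∞ θ ∧
    (∀ᶠ s in 𝓝 s₀, θ s = s) ∧ (∀ s, |θ s - s₀| < δ) ∧ (∀ s, δ ≤ |s - s₀| → θ s = s₀) := by
  let b : ContDiffBump s₀ := ⟨δ / 2, δ, by linarith, by linarith⟩
  have hz : ∀ s, δ ≤ |s - s₀| → b s = 0 := fun s hs =>
    b.zero_of_le_dist (by simpa [Real.dist_eq] using hs)
  refine ⟨fun s => s₀ + (s - s₀) * b s, ?_, ?_, ?_, ?_⟩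
  · exact contDiff_const.add ((contDiff_id.sub contDiff_const).mul b.contDiff)
  · filter_upwards [b.eventuallyEq_one] with s hs
    simp [hs]
  · intro s
    have h0 := b.nonneg (x := s)
    have h1 := b.le_one (x := s)
    rcases le_or_gt δ |s - s₀| with h | h
    · simp [hz s h, hδ]
    · simp only [add_sub_cancel_left, abs_mul, abs_of_nonneg h0]
      nlinarith [abs_nonneg (s - s₀)]
  · intro s hs
    simp [hz s hs]

lemma arcSm_of_global {U : Set E} (hU : IsOpen U) {f : E → F}
    (h : ∀ c : ℝ → E, ContDiff ℝ ∞ c → Set.range c ⊆ U → ContDiff ℝ ∞ (f ∘ c)) :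
    ArcSm f U := by
  intro c hc t ht
  obtain ⟨δ, hδ, hb⟩ := Metric.isOpen_iff.1 (hU.preimage hc.continuous) t ht
  obtain ⟨θ, h1, h2, h3, -⟩ := exists_theta t δ hδ
  have := h (c ∘ θ) (hc.comp h1) (by
    rintro _ ⟨s, rfl⟩
    exact hb (by simpa [Real.dist_eq] using h3 s))
  refine this.contDiffAt.congr_of_eventuallyEq ?_
  filter_upwards [h2] with s hs
  simp [hs]

lemma ArcSm.comp {U : Set E} {f : E → F} (hf : ArcSm f U) {φ : E' → E} (hφ : ContDiff ℝ ∞ φ) :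
    ArcSm (f ∘ φ) (φ ⁻¹' U) := fun c hc t ht => hf (φ ∘ c) (hφ.comp hc) t ht

lemma ArcSm.clm {U : Set E} {f : E → F} (hf : ArcSm f U) (L : F →L[ℝ] F') :
    ArcSm (L ∘ f) U := fun c hc t ht => L.contDiff.contDiffAt.comp t (hf c hc t ht)

lemma ArcSm.mono {U V : Set E} {f : E → F} (hf : ArcSm f U) (h : V ⊆ U) : ArcSm f V :=
  fun c hc t ht => hf c hc t (h ht)

/-- Rapidly decreasing sequences. -/
def Rapid (a : ℕ → E) : Prop := ∀ k : ℕ, ∃ C : ℝ, ∀ n, (2 : ℝ) ^ (n * k) * ‖a n‖ ≤ C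

lemma Rapid.two {a : ℕ → E} (h : Rapid a) : Rapid (fun n => (2 : ℝ) ^ n • a n) := by
  intro k
  obtain ⟨C, hC⟩ := h (k + 1)
  refine ⟨C, fun n => ?_⟩
  have := hC n
  rw [norm_smul, norm_pow, Real.norm_ofNat, ← mul_assoc, ← pow_add]
  convert this using 3
  ring

lemma rapid_of_le {a : ℕ → E} {C : ℝ} (h : ∀ n, ‖a n‖ ≤ C * (1 / 2) ^ (n * n)) : Rapid a := by
  intro k
  have hC : 0 ≤ C := by simpa using (norm_nonneg _).trans (h 0)
  refine ⟨2 ^ (k * k) * C, fun n => ?_⟩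
  calc (2 : ℝ) ^ (n * k) * ‖a n‖ ≤ 2 ^ (n * k) * (C * (1 / 2) ^ (n * n)) := by gcongr; exact h n
    _ ≤ 2 ^ (n * n + k * k) * (C * (1 / 2) ^ (n * n)) := by
        gcongr
        · norm_num
        · rcases le_total n k with h | h
          · have := Nat.mul_le_mul_right k h
            omega
          · have := Nat.mul_le_mul_left n h
            omega
    _ = 2 ^ (k * k) * C := by
        rw [pow_add]
        have : (2 : ℝ) ^ (n * n) * (1 / 2) ^ (n * n) = 1 := by rw [← mul_pow]; norm_num
        linear_combination (2 ^ (k * k) * C) * this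

/-- The series of rescaled bumps. -/
noncomputable def S (α : ℝ → ℝ) (a : ℕ → E) (t : ℝ) : E := ∑' n, α (2 ^ n * t) • a n

lemma S_eventually {t : ℝ} (ht : t ≠ 0) : ∃ N, ∀ᶠ r in 𝓝 t, ∀ (α : ℝ → ℝ) (a : ℕ → E),
    (∀ s, α s ≠ 0 → 3 / 4 ≤ s ∧ s ≤ 5 / 4) →
      S α a r = ∑ n ∈ Finset.range N, α (2 ^ n * r) • a n := by
  have ht' : 0 < |t| := abs_pos.2 ht
  obtain ⟨N, hN⟩ := pow_unbounded_of_one_lt (4 / |t|) (one_lt_two : (1 : ℝ) < 2)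
  rw [div_lt_iff₀ ht'] at hN
  refine ⟨N, ?_⟩
  have : ∀ᶠ r in 𝓝 t, |t| / 2 < |r| :=
    continuous_abs.continuousAt.eventually (lt_mem_nhds (by linarith))
  filter_upwards [this] with r hr α a hs
  refine tsum_eq_sum fun n hn => ?_
  by_contra hne
  have h0 : α (2 ^ n * r) ≠ 0 := fun h => hne (by simp [h])
  obtain ⟨h1, h2⟩ := hs _ h0
  have hle : (2 : ℝ) ^ N ≤ 2 ^ n := pow_le_pow_right₀ one_le_two (by simpa using hn)
  have h3 : |(2 : ℝ) ^ n * r| ≤ 5 / 4 := abs_le.2 ⟨by linarith, h2⟩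
  rw [abs_mul, abs_of_pos (by positivity)] at h3
  have h4 : (2 : ℝ) ^ N * |r| ≤ 2 ^ n * |r| := by gcongr
  have h5 : (2 : ℝ) ^ N * (|t| / 2) ≤ 2 ^ N * |r| := by gcongr
  linarith

lemma S_bound {α : ℝ → ℝ} (hα : Continuous α) (hs : ∀ s, α s ≠ 0 → 3 / 4 ≤ s ∧ s ≤ 5 / 4)
    {a : ℕ → E} (ha : Rapid a) : ∃ C, ∀ t, ‖S α a t‖ ≤ C * t ^ 2 := by
  obtain ⟨M, hM⟩ : ∃ M, ∀ s, ‖α s‖ ≤ M := by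
    obtain ⟨M, hM⟩ := (isCompact_Icc (a := (3 / 4 : ℝ)) (b := 5 / 4)).exists_bound_of_continuousOn
      hα.continuousOn
    refine ⟨max M 0, fun s => ?_⟩
    by_cases h : α s = 0
    · simp [h]
    · exact (hM s (hs s h)).trans (le_max_left _ _)
  have hM0 : 0 ≤ M := (norm_nonneg _).trans (hM 0)
  obtain ⟨C, hC⟩ := ha 3
  have hC0 : 0 ≤ C := le_trans (by positivity) (hC 0)
  refine ⟨M * C * 4 * 2, fun t => ?_⟩
  have hterm : ∀ n : ℕ, ‖α (2 ^ n * t) • a n‖ ≤ (M * C * 4 * t ^ 2) * (1 / 2) ^ n := by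
    intro n
    by_cases h : α (2 ^ n * t) = 0
    · simp only [h, zero_smul, norm_zero]; positivity
    obtain ⟨h1, h2⟩ := hs _ h
    rw [norm_smul]
    have hp : (0 : ℝ) < 2 ^ n := by positivity
    have e1 : (1 / 2 : ℝ) ^ n = ((2 : ℝ) ^ n)⁻¹ := by simp
    have e2 : ‖a n‖ ≤ C * (((2 : ℝ) ^ n)⁻¹) ^ 3 := by
      have := hC n
      rw [pow_mul] at this
      rw [inv_pow, ← div_eq_mul_inv, le_div_iff₀ (by positivity)]
      linarith
    have e3 : ((2 : ℝ) ^ n)⁻¹ ≤ 2 * t := by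
      rw [inv_le_iff_one_le_mul₀ hp]; linarith
    have e4 : (((2 : ℝ) ^ n)⁻¹) ^ 2 ≤ (2 * t) ^ 2 := by gcongr
    calc ‖α (2 ^ n * t)‖ * ‖a n‖ ≤ M * (C * (((2 : ℝ) ^ n)⁻¹) ^ 3) := by
          gcongr; exact hM _
      _ = M * C * (((2 : ℝ) ^ n)⁻¹) ^ 2 * ((2 : ℝ) ^ n)⁻¹ := by ring
      _ ≤ M * C * (2 * t) ^ 2 * ((2 : ℝ) ^ n)⁻¹ := by gcongr
      _ = _ := by rw [e1]; ring
  have hsum : Summable fun n : ℕ => (M * C * 4 * t ^ 2) * (1 / 2 : ℝ) ^ n :=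
    (summable_geometric_two).mul_left _
  calc ‖S α a t‖ ≤ ∑' n, ‖α (2 ^ n * t) • a n‖ :=
        norm_tsum_le_tsum_norm (hsum.of_nonneg_of_le (fun _ => norm_nonneg _) hterm)
    _ ≤ ∑' n : ℕ, (M * C * 4 * t ^ 2) * (1 / 2 : ℝ) ^ n :=
        (hsum.of_nonneg_of_le (fun _ => norm_nonneg _) hterm).tsum_le_tsum hterm hsum
    _ = _ := by rw [tsum_mul_left, tsum_geometric_two]; ring

lemma S_hasDerivAt {α : ℝ → ℝ} (hα : ContDiff ℝ ∞ α)
    (hs : ∀ s, α s ≠ 0 → 3 / 4 ≤ s ∧ s ≤ 5 / 4) 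
    (hs' : ∀ s, deriv α s ≠ 0 → 3 / 4 ≤ s ∧ s ≤ 5 / 4) {a : ℕ → E} (ha : Rapid a) (t : ℝ) :
    HasDerivAt (S α a) (S (deriv α) (fun n => (2 : ℝ) ^ n • a n) t) t := by
  by_cases ht : t = 0
  · subst ht
    have hz : ∀ (β : ℝ → ℝ) (b : ℕ → E), (∀ s, β s ≠ 0 → 3 / 4 ≤ s ∧ s ≤ 5 / 4) → S β b 0 = 0 := by
      intro β b hβ
      have : β 0 = 0 := by
        by_contra h
        have := (hβ 0 h).1
        norm_num at this
      simp [S, this]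
    rw [hz _ _ hs']
    obtain ⟨C, hC⟩ := S_bound hα.continuous hs ha
    rw [hasDerivAt_iff_isLittleO_nhds_zero]
    simp only [zero_add, hz _ a hs, sub_zero, smul_zero]
    have : (S α a) =O[𝓝 0] fun t : ℝ => t ^ 2 :=
      Asymptotics.IsBigO.of_bound C (Eventually.of_forall fun t => by simpa using hC t)
    refine this.trans_isLittleO ?_
    simpa using (Asymptotics.isLittleO_pow_pow (𝕜 := ℝ) (m := 1) (n := 2) (by norm_num))
  · obtain ⟨N₁, h₁⟩ := S_eventually (E := E) ht
    have hd : HasDerivAt (fun r => ∑ n ∈ Finset.range N₁, α (2 ^ n * r) • a n)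
        (∑ n ∈ Finset.range N₁, deriv α (2 ^ n * t) • ((2 : ℝ) ^ n • a n)) t := by
      refine HasDerivAt.fun_sum fun n _ => ?_
      have h1 : HasDerivAt α (deriv α (2 ^ n * t)) (2 ^ n * t) :=
        (hα.differentiable (by simp)).differentiableAt.hasDerivAt
      have h2 : HasDerivAt (fun r : ℝ => (2 : ℝ) ^ n * r) (2 ^ n) t := by
        simpa using (hasDerivAt_id t).const_mul ((2 : ℝ) ^ n)
      have := (h1.comp t h2).smul_const (a n)
      rw [smul_smul]
      exact this
    rw [h₁.self_of_nhds _ _ hs']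
    exact hd.congr_of_eventuallyEq (h₁.mono fun r hr => hr _ _ hs)

lemma supp_deriv {α : ℝ → ℝ} (hs : ∀ s, α s ≠ 0 → 3 / 4 ≤ s ∧ s ≤ 5 / 4) (s : ℝ)
    (h : deriv α s ≠ 0) : 3 / 4 ≤ s ∧ s ≤ 5 / 4 := by
  by_contra hn
  have ho : (Icc (3 / 4 : ℝ) (5 / 4))ᶜ ∈ 𝓝 s := isClosed_Icc.isOpen_compl.mem_nhds hn
  refine h ?_
  have : α =ᶠ[𝓝 s] fun _ => 0 := by
    filter_upwards [ho] with r hr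
    by_contra h0
    exact hr (hs r h0)
  rw [this.deriv_eq]
  simp

lemma S_contDiff_nat (m : ℕ) : ∀ {α : ℝ → ℝ}, ContDiff ℝ ∞ α →
    (∀ s, α s ≠ 0 → 3 / 4 ≤ s ∧ s ≤ 5 / 4) → ∀ {a : ℕ → E}, Rapid a →
    ContDiff ℝ m (S α a) := by
  induction m with
  | zero =>
    intro α hα hs a ha
    exact contDiff_zero.2 (continuous_iff_continuousAt.2 fun t =>
      (S_hasDerivAt hα hs (supp_deriv hs) ha t).continuousAt)
  | succ m ih =>
    intro α hα hs a ha
    have hd := S_hasDerivAt hα hs (supp_deriv hs) ha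
    rw [Nat.cast_add, Nat.cast_one, contDiff_succ_iff_deriv]
    refine ⟨fun t => (hd t).differentiableAt, by simp, ?_⟩
    rw [show deriv (S α a) = S (deriv α) (fun n => (2 : ℝ) ^ n • a n) from
      funext fun t => (hd t).deriv]
    exact ih ((contDiff_infty_iff_deriv.1 hα).2) (supp_deriv hs) ha.two

lemma S_contDiff {α : ℝ → ℝ} (hα : ContDiff ℝ ∞ α)
    (hs : ∀ s, α s ≠ 0 → 3 / 4 ≤ s ∧ s ≤ 5 / 4) {a : ℕ → E} (ha : Rapid a) :
    ContDiff ℝ ∞ (S α a) :=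
  contDiff_infty.2 fun m => S_contDiff_nat m hα hs ha

/-- The special curve lemma. -/
lemma exists_curve {a b : ℕ → E} (ha : Rapid a) (hb : Rapid b) : ∃ c : ℝ → E, ContDiff ℝ ∞ c ∧
    c 0 = 0 ∧ ∀ m : ℕ, ∀ᶠ t in 𝓝 ((1 / 2 : ℝ) ^ m), c t = a m + (2 ^ m * t - 1) • b m := by
  let φ : ContDiffBump (1 : ℝ) := ⟨1 / 8, 1 / 4, by norm_num, by norm_num⟩
  have hφs : ∀ s, φ s ≠ 0 → 3 / 4 ≤ s ∧ s ≤ 5 / 4 := by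
    intro s hs
    by_contra hn
    refine hs (φ.zero_of_le_dist ?_)
    change (1 / 4 : ℝ) ≤ dist s 1
    rw [Real.dist_eq]
    by_contra h
    rw [not_le, abs_lt] at h
    exact hn ⟨by linarith, by linarith⟩
  let β : ℝ → ℝ := fun s => (s - 1) * φ s
  have hβs : ∀ s, β s ≠ 0 → 3 / 4 ≤ s ∧ s ≤ 5 / 4 := fun s hs => hφs s (right_ne_zero_of_mul hs)
  have hβ : ContDiff ℝ ∞ β := (contDiff_id.sub contDiff_const).mul φ.contDiff
  refine ⟨fun t => S φ a t + S β b t, (S_contDiff φ.contDiff hφs ha).add (S_contDiff hβ hβs hb),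
    ?_, fun m => ?_⟩
  · have h1 : φ 0 = 0 := by
      by_contra h
      have := (hφs 0 h).1
      norm_num at this
    simp [S, β, h1]
  · have hp : (0 : ℝ) < 2 ^ m := by positivity
    have hcont : Tendsto (fun t : ℝ => (2 : ℝ) ^ m * t) (𝓝 ((1 / 2 : ℝ) ^ m)) (𝓝 1) := by
      have : Continuous fun t : ℝ => (2 : ℝ) ^ m * t := by fun_prop
      have h := this.tendsto ((1 / 2 : ℝ) ^ m)
      rwa [← mul_pow, show (2 : ℝ) * (1 / 2) = 1 by norm_num, one_pow] at h
    have h1 : ∀ᶠ t in 𝓝 ((1 / 2 : ℝ) ^ m), (2 : ℝ) ^ m * t ∈ Ioo (7 / 8 : ℝ) (9 / 8) :=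
      hcont.eventually (Ioo_mem_nhds (by norm_num) (by norm_num))
    have h2 := hcont.eventually φ.eventuallyEq_one
    filter_upwards [h1, h2] with t ht ht2
    have ht0 : 0 < t := by
      by_contra h
      have := mul_nonpos_of_nonneg_of_nonpos hp.le (not_lt.1 h)
      linarith [ht.1]
    have key : ∀ (γ : ℝ → ℝ) (d : ℕ → E), (∀ s, γ s ≠ 0 → 3 / 4 ≤ s ∧ s ≤ 5 / 4) →
        S γ d t = γ (2 ^ m * t) • d m := by
      intro γ d hγ
      refine tsum_eq_single m fun n hn => ?_
      by_contra h
      obtain ⟨h3, h4⟩ := hγ (2 ^ n * t) (fun h0 => h (by simp [h0]))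
      rcases lt_or_gt_of_ne hn with hlt | hlt
      · have : (2 : ℝ) ^ (n + 1) ≤ 2 ^ m := pow_le_pow_right₀ one_le_two hlt
        rw [pow_succ] at this
        nlinarith [ht.2]
      · have : (2 : ℝ) ^ (m + 1) ≤ 2 ^ n := pow_le_pow_right₀ one_le_two hlt
        rw [pow_succ] at this
        nlinarith [ht.1]
    have ht2' : φ (2 ^ m * t) = 1 := ht2
    rw [key _ _ hφs, key _ _ hβs]
    simp [β, ht2']

lemma iteratedDeriv_scale (n : ℕ) (f : ℝ → F) (c t : ℝ) :
    iteratedDeriv n (fun x => f (c * x)) t = c ^ n • iteratedDeriv n f (c * t) := by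
  induction n generalizing t with
  | zero => simp
  | succ n ih =>
    rw [iteratedDeriv_succ, funext ih, deriv_fun_const_smul_field,
      deriv_comp_mul_left c (iteratedDeriv n f), iteratedDeriv_succ, smul_smul, pow_succ]

/-- Iterated directional derivatives are locally bounded. -/
lemma ArcSm.bdd {U : Set E} (hU : IsOpen U) {f : E → F} (hf : ArcSm f U) (k : ℕ) (v : E)
    {x : E} (hx : x ∈ U) :
    ∃ C, ∀ᶠ y in 𝓝 x, ‖iteratedDeriv k (fun t : ℝ => f (y + t • v)) 0‖ ≤ C := by
  by_contra! hcon
  have hsel : ∀ m : ℕ, ∃ y, ‖y - x‖ ≤ (1 / 2 : ℝ) ^ (m * m) ∧ y ∈ U ∧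
      (m : ℝ) / ((2 : ℝ) ^ m * (1 / 2) ^ (m * m)) ^ k ≤
        ‖iteratedDeriv k (fun t : ℝ => f (y + t • v)) 0‖ := by
    intro m
    have h1 := hcon ((m : ℝ) / ((2 : ℝ) ^ m * (1 / 2) ^ (m * m)) ^ k)
    have h2 : ∀ᶠ y in 𝓝 x, ‖y - x‖ ≤ (1 / 2 : ℝ) ^ (m * m) := by
      filter_upwards [Metric.closedBall_mem_nhds x (ε := (1 / 2 : ℝ) ^ (m * m)) (by positivity)]
        with y hy
      simpa [dist_eq_norm] using hy
    obtain ⟨y, hy1, hy2, hy3⟩ := (h1.and_eventually (h2.and (hU.mem_nhds hx))).exists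
    exact ⟨y, hy2, hy3, hy1.le⟩
  choose y hy hyU hyk using hsel
  have ha : Rapid (fun m => y m - x) := rapid_of_le (C := 1) (fun n => by simpa using hy n)
  have hb : Rapid (fun m : ℕ => (1 / 2 : ℝ) ^ (m * m) • v) := rapid_of_le (C := ‖v‖) (fun n => by
    rw [norm_smul, mul_comm]; simp)
  obtain ⟨c, hc, hc0, hcm⟩ := exists_curve ha hb
  have hsm : ContDiffAt ℝ ∞ (f ∘ (fun t => x + c t)) 0 :=
    hf _ (contDiff_const.add hc) 0 (by simpa [hc0] using hx)
  set g := f ∘ (fun t => x + c t) with hg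
  have hcont : ContinuousAt (iteratedDeriv k g) 0 := by
    rw [iteratedDeriv_eq_equiv_comp]
    exact (LinearIsometryEquiv.continuous _).continuousAt.comp
      ((hsm.continuousAt_iteratedFDeriv (by exact_mod_cast le_top)))
  have hval : ∀ m : ℕ, (m : ℝ) ≤ ‖iteratedDeriv k g ((1 / 2 : ℝ) ^ m)‖ := by
    intro m
    set l : ℝ := (2 : ℝ) ^ m * (1 / 2) ^ (m * m) with hl
    have hlpos : 0 < l := by positivity
    have e1 : ((2 : ℝ) ^ m * (1 / 2) ^ m) = 1 := by rw [← mul_pow]; norm_num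
    have h1 : g =ᶠ[𝓝 ((1 / 2 : ℝ) ^ m)]
        fun t => (fun r => f (y m + (l * r) • v)) (t - (1 / 2 : ℝ) ^ m) := by
      filter_upwards [hcm m] with t ht
      simp only [hg, Function.comp, ht]
      congr 1
      rw [smul_smul]
      have : l * (t - (1 / 2) ^ m) = (2 ^ m * t - 1) * (1 / 2) ^ (m * m) := by
        rw [hl]; linear_combination (-(1 / 2 : ℝ) ^ (m * m)) * e1
      rw [this]; abel
    rw [h1.iteratedDeriv_eq, iteratedDeriv_comp_sub_const k (fun r => f (y m + (l * r) • v))]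
    beta_reduce
    rw [sub_self, iteratedDeriv_scale k (fun t : ℝ => f (y m + t • v)) l, mul_zero, norm_smul,
      Real.norm_of_nonneg (by positivity), mul_comm, ← div_le_iff₀ (by positivity)]
    exact hyk m
  obtain ⟨K, hK⟩ : ∃ K, ∀ᶠ t in 𝓝 (0 : ℝ), ‖iteratedDeriv k g t‖ ≤ K := 
    ⟨‖iteratedDeriv k g 0‖ + 1, (hcont.norm.eventually (gt_mem_nhds (lt_add_one _))).mono
      fun t ht => le_of_lt ht⟩
  have htend : Tendsto (fun m : ℕ => (1 / 2 : ℝ) ^ m) atTop (𝓝 0) :=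
    tendsto_pow_atTop_nhds_zero_of_lt_one (by norm_num) (by norm_num)
  obtain ⟨m, hm1, hm2⟩ := ((htend.eventually hK).and (eventually_gt_atTop ⌈K⌉₊)).exists
  have := hval m
  have h3 : K < m := (Nat.le_ceil K).trans_lt (by exact_mod_cast hm2)
  linarith

end basic
end Boman

namespace Boman
open Set Filter Topology
open scoped ContDiff
set_option linter.unusedSectionVars false

section interp
variable {E E' F F' : Type*} [NormedAddCommGroup E] [NormedSpace ℝ E]
  [NormedAddCommGroup F] [NormedSpace ℝ F]

lemma hasDerivAt_of_cda {u : ℝ → F} {t : ℝ} (h : ContDiffAt ℝ 2 u t) :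
    HasDerivAt u (deriv u t) t ∧ HasDerivAt (deriv u) (iteratedDeriv 2 u t) t := by
  refine ⟨(h.differentiableAt (by simp)).hasDerivAt, ?_⟩
  have h1 : ContDiffAt ℝ 1 (deriv u) t := by
    have := h.fderiv_right (m := 1) (by norm_num)
    exact ContDiffAt.clm_apply this (contDiffAt_const (c := (1 : ℝ)))
  rw [iteratedDeriv_succ, iteratedDeriv_one]
  exact (h1.differentiableAt (by simp)).hasDerivAt

lemma taylor2 {u : ℝ → F} {r B : ℝ} (hr : 0 ≤ r) (h : ∀ t ∈ Icc 0 r, ContDiffAt ℝ 2 u t)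
    (hB : ∀ t ∈ Icc 0 r, ‖iteratedDeriv 2 u t‖ ≤ B) :
    ‖u r - u 0 - r • deriv u 0‖ ≤ B * r ^ 2 := by
  have hB0 : 0 ≤ B := (norm_nonneg _).trans (hB 0 ⟨le_rfl, hr⟩)
  have h1 : ∀ t ∈ Icc 0 r, ‖deriv u t - deriv u 0‖ ≤ B * (t - 0) :=
    norm_image_sub_le_of_norm_deriv_le_segment'
      (fun t ht => (hasDerivAt_of_cda (h t ht)).2.hasDerivWithinAt)
      (fun t ht => hB t (Ico_subset_Icc_self ht))
  have h2 := norm_image_sub_le_of_norm_deriv_le_segment' (f := fun t => u t - t • deriv u 0)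
    (f' := fun t => deriv u t - deriv u 0) (a := 0) (b := r) (C := B * r)
    (fun t ht => by
      have := (hasDerivAt_of_cda (h t ht)).1.sub ((hasDerivAt_id t).smul_const (deriv u 0))
      rw [one_smul] at this
      exact this.hasDerivWithinAt)
    (fun t ht => (h1 t (Ico_subset_Icc_self ht)).trans (by
      have := ht.2.le
      gcongr; linarith)) r ⟨hr, le_rfl⟩
  calc ‖u r - u 0 - r • deriv u 0‖ = ‖u r - r • deriv u 0 - (u 0 - (0 : ℝ) • deriv u 0)‖ := by
        congr 1; simp; abel
    _ ≤ B * r * (r - 0) := h2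
    _ = _ := by ring

lemma landau {u : ℝ → F} (hu : ContDiff ℝ 2 u) {A B : ℝ} (hA : ∀ s, ‖u s‖ ≤ A)
    (hB : ∀ s, ‖iteratedDeriv 2 u s‖ ≤ B) (s : ℝ) : ‖deriv u s‖ ^ 2 ≤ 8 * A * B := by
  have hA0 : 0 ≤ A := (norm_nonneg _).trans (hA 0)
  have hB0 : 0 ≤ B := (norm_nonneg _).trans (hB 0)
  have key : ∀ r : ℝ, 0 ≤ B * (r * r) + (-‖deriv u s‖) * r + 2 * A := by
    intro r
    rcases le_or_gt r 0 with hr | hr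
    · nlinarith [norm_nonneg (deriv u s), mul_nonneg hB0 (mul_self_nonneg r)]
    have h := taylor2 (u := fun t => u (s + t)) (r := r) (B := B) hr.le
      (fun t _ => (hu.comp (contDiff_const.add contDiff_id)).contDiffAt)
      (fun t _ => by rw [iteratedDeriv_comp_const_add]; exact hB _)
    rw [deriv_comp_const_add] at h
    simp only [add_zero] at h
    have h3 : ‖r • deriv u s‖ ≤ B * r ^ 2 + A + A := by
      calc ‖r • deriv u s‖ = ‖u (s + r) - u s - (u (s + r) - u s - r • deriv u s)‖ := by
            congr 1; abel
        _ ≤ ‖u (s + r) - u s‖ + ‖u (s + r) - u s - r • deriv u s‖ := norm_sub_le _ _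
        _ ≤ (‖u (s + r)‖ + ‖u s‖) + B * r ^ 2 := add_le_add (norm_sub_le _ _) h
        _ ≤ (A + A) + B * r ^ 2 := by gcongr <;> apply hA
        _ = _ := by ring
    rw [norm_smul, Real.norm_of_nonneg hr.le] at h3
    nlinarith
  have := discrim_le_zero key
  rw [discrim] at this
  nlinarith

lemma landau_kolmogorov (k : ℕ) : ∃ C : ℝ, 0 ≤ C ∧ ∀ u : ℝ → F, ContDiff ℝ ∞ u →
    (∀ i, ∃ M, ∀ s, ‖iteratedDeriv i u s‖ ≤ M) → ∀ A B : ℝ, (∀ s, ‖u s‖ ≤ A) →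
    (∀ s, ‖iteratedDeriv (k + 1) u s‖ ≤ B) → ∀ s, ‖deriv u s‖ ^ (k + 1) ≤ C * A ^ k * B := by
  induction k with
  | zero =>
    refine ⟨1, zero_le_one, fun u hu hbd A B hA hB s => ?_⟩
    simpa using hB s
  | succ k ih =>
    obtain ⟨C, hC0, hC⟩ := ih
    refine ⟨8 ^ (k + 1) * C, by positivity, fun u hu hbd A M hA hM s => ?_⟩
    have hA0 : 0 ≤ A := (norm_nonneg _).trans (hA 0)
    have hM0 : 0 ≤ M := (norm_nonneg _).trans (hM 0)
    have hbdd : BddAbove (range fun s => ‖deriv u s‖) := by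
      obtain ⟨M1, hM1⟩ := hbd 1
      refine ⟨M1, ?_⟩
      rintro _ ⟨r, rfl⟩
      simpa using hM1 r
    set N := ⨆ s, ‖deriv u s‖ with hN
    have hle : ∀ s, ‖deriv u s‖ ≤ N := fun s => le_ciSup hbdd s
    have hN0 : 0 ≤ N := (norm_nonneg _).trans (hle 0)
    have h1 := hC (deriv u) (contDiff_infty_iff_deriv.1 hu).2
      (fun i => by
        obtain ⟨M', hM'⟩ := hbd (i + 1)
        exact ⟨M', fun s => by rw [← iteratedDeriv_succ']; exact hM' s⟩) N M hle
      (fun s => by rw [← iteratedDeriv_succ']; exact hM s)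
    set X := C * N ^ k * M with hX
    have hX0 : 0 ≤ X := by positivity
    set B := X ^ ((1 : ℝ) / (k + 1 : ℕ)) with hB
    have hBX : B ^ (k + 1) = X := by
      rw [hB, one_div]; exact Real.rpow_inv_natCast_pow hX0 (by simp)
    have hB0 : 0 ≤ B := Real.rpow_nonneg hX0 _
    have h2 : ∀ s, ‖iteratedDeriv 2 u s‖ ≤ B := by
      intro s
      refine le_of_pow_le_pow_left₀ (n := k + 1) (by simp) hB0 ?_
      rw [hBX, iteratedDeriv_succ, iteratedDeriv_one]
      exact h1 s
    have h3 : ∀ s, ‖deriv u s‖ ≤ √(8 * A * B) := fun s =>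
      Real.le_sqrt_of_sq_le (landau (by exact_mod_cast contDiff_infty.1 hu 2) hA h2 s)
    have h4 : N ^ 2 ≤ 8 * A * B := by
      have : N ≤ √(8 * A * B) := ciSup_le h3
      calc N ^ 2 ≤ √(8 * A * B) ^ 2 := by gcongr
        _ = _ := Real.sq_sqrt (by positivity)
    have h5 : N ^ k * N ^ (k + 2) ≤ N ^ k * (8 ^ (k + 1) * C * A ^ (k + 1) * M) := by
      calc N ^ k * N ^ (k + 2) = (N ^ 2) ^ (k + 1) := by rw [← pow_add, ← pow_mul]; congr 1; ring
        _ ≤ (8 * A * B) ^ (k + 1) := by gcongr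
        _ = 8 ^ (k + 1) * A ^ (k + 1) * X := by rw [mul_pow, mul_pow, hBX]
        _ = _ := by rw [hX]; ring
    have h6 : N ^ (k + 2) ≤ 8 ^ (k + 1) * C * A ^ (k + 1) * M := by
      rcases hN0.eq_or_lt with h0 | h0
      · rw [← h0, zero_pow (by simp)]; positivity
      · exact le_of_mul_le_mul_left h5 (by positivity)
    exact (pow_le_pow_left₀ (norm_nonneg _) (hle s) _).trans h6

lemma decay_deriv {u : ℕ → ℝ → F} (hu : ∀ j, ContDiff ℝ ∞ (u j)) {Q : ℝ} (hQ : 0 < Q)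
    (hb : ∀ k : ℕ, ∃ C : ℝ, ∀ j s, ‖iteratedDeriv k (u j) s‖ ≤ C * Q ^ j)
    (hd : ∃ C q : ℝ, 0 < q ∧ q < 1 ∧ ∀ j s, ‖u j s‖ ≤ C * q ^ j) :
    ∃ C q : ℝ, 0 < q ∧ q < 1 ∧ ∀ j s, ‖deriv (u j) s‖ ≤ C * q ^ j := by
  obtain ⟨A, q, hq0, hq1, hA⟩ := hd
  have hA0 : 0 ≤ A := by simpa using (norm_nonneg _).trans (hA 0 0)
  obtain ⟨m, hm⟩ : ∃ m : ℕ, q ^ m < 1 / Q := exists_pow_lt_of_lt_one (by positivity) hq1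
  rw [lt_div_iff₀ hQ] at hm
  obtain ⟨C, hC0, hC⟩ := landau_kolmogorov (F := F) m
  obtain ⟨M, hM⟩ := hb (m + 1)
  have hM0 : 0 ≤ M := by simpa using (norm_nonneg _).trans (hM 0 0)
  have h1 : ∀ j s, ‖deriv (u j) s‖ ^ (m + 1) ≤ (C * A ^ m * M) * (q ^ m * Q) ^ j := by
    intro j s
    have := hC (u j) (hu j) (fun i => by
      obtain ⟨C', hC'⟩ := hb i
      exact ⟨_, hC' j⟩) _ _ (hA j) (hM j) s
    refine this.trans_eq ?_
    rw [mul_pow, mul_pow, ← pow_mul, ← pow_mul, mul_comm j m]; ring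
  have hσ : 0 < q ^ m * Q := by positivity
  refine ⟨(C * A ^ m * M) ^ ((1 : ℝ) / (m + 1 : ℕ)), (q ^ m * Q) ^ ((1 : ℝ) / (m + 1 : ℕ)),
    Real.rpow_pos_of_pos hσ _, Real.rpow_lt_one hσ.le hm (by positivity), fun j s => ?_⟩
  refine le_of_pow_le_pow_left₀ (n := m + 1) (by simp) ?_ ?_
  · have := Real.rpow_nonneg hσ.le ((1 : ℝ) / (m + 1 : ℕ))
    have := Real.rpow_nonneg (show 0 ≤ C * A ^ m * M by positivity) ((1 : ℝ) / (m + 1 : ℕ))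
    positivity
  · rw [mul_pow, ← pow_mul, mul_comm j, pow_mul, one_div,
      Real.rpow_inv_natCast_pow (by positivity) (by simp),
      Real.rpow_inv_natCast_pow hσ.le (by simp)]
    exact h1 j s

lemma decay_iteratedDeriv (n : ℕ) : ∀ {u : ℕ → ℝ → F} (_ : ∀ j, ContDiff ℝ ∞ (u j)) {Q : ℝ}
    (_ : 0 < Q)
    (_ : ∀ k : ℕ, ∃ C : ℝ, ∀ j s, ‖iteratedDeriv k (u j) s‖ ≤ C * Q ^ j)
    (_ : ∃ C q : ℝ, 0 < q ∧ q < 1 ∧ ∀ j s, ‖u j s‖ ≤ C * q ^ j),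
    ∃ C q : ℝ, 0 < q ∧ q < 1 ∧ ∀ j s, ‖iteratedDeriv n (u j) s‖ ≤ C * q ^ j := by
  induction n with
  | zero => intro u hu Q hQ hb hd; simpa using hd
  | succ n ih =>
    intro u hu Q hQ hb hd
    simp only [iteratedDeriv_succ'] at hb ⊢
    refine ih (u := fun j => deriv (u j)) (fun j => (contDiff_infty_iff_deriv.1 (hu j)).2) hQ
      (fun k => by simpa only [iteratedDeriv_succ'] using hb (k + 1)) ?_
    exact decay_deriv hu hQ hb hd

lemma ArcSm.bdd_compact {f : E → F} (hf : ArcSm f univ) (k : ℕ) (v : E)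
    {K : Set E} (hK : IsCompact K) :
    ∃ C, ∀ y ∈ K, ‖iteratedDeriv k (fun t : ℝ => f (y + t • v)) 0‖ ≤ C := by
  refine hK.induction_on (p := fun K => ∃ C, ∀ y ∈ K, 
    ‖iteratedDeriv k (fun t : ℝ => f (y + t • v)) 0‖ ≤ C) ⟨0, by simp⟩ ?_ ?_ ?_
  · rintro s t hst ⟨C, hC⟩
    exact ⟨C, fun y hy => hC y (hst hy)⟩
  · rintro s t ⟨C, hC⟩ ⟨D, hD⟩
    refine ⟨max C D, ?_⟩
    rintro y (hy | hy)
    · exact (hC y hy).trans (le_max_left _ _)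
    · exact (hD y hy).trans (le_max_right _ _)
  · intro x _
    obtain ⟨C, hC⟩ := hf.bdd isOpen_univ k v (mem_univ x)
    exact ⟨_, mem_nhdsWithin_of_mem_nhds hC, C, fun y hy => hy⟩

end interp
end Boman

namespace Boman
open Set Filter Topology
open scoped ContDiff
set_option linter.unusedSectionVars false

section core
variable {E F : Type*} [NormedAddCommGroup E] [NormedSpace ℝ E]
  [NormedAddCommGroup F] [NormedSpace ℝ F]

lemma core [CompleteSpace F] {G : ℝ × ℝ → F} (hG : ArcSm G univ) {s₀ R : ℝ}
    (hR : ∀ s t, R ≤ |s - s₀| → G (s, t) = G (s₀, t)) :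
    ContDiff ℝ ∞ (fun s => deriv (fun t => G (s, t)) 0) := by
  have hs : ∀ t, ContDiff ℝ ∞ (fun s => G (s, t)) := fun t => contDiff_iff_contDiffAt.2 fun x =>
    hG (fun s => (s, t)) (by fun_prop) x (mem_univ _)
  have ht : ∀ s, ContDiff ℝ ∞ (fun t => G (s, t)) := fun s => contDiff_iff_contDiffAt.2 fun x =>
    hG (fun t => (s, t)) (by fun_prop) x (mem_univ _)
  have hK : IsCompact (Metric.closedBall s₀ (|R| + 1) ×ˢ Icc (0 : ℝ) 1) :=
    (isCompact_closedBall _ _).prod isCompact_Icc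
  have hs₀ : s₀ ∈ Metric.closedBall s₀ (|R| + 1) := Metric.mem_closedBall_self (by positivity)
  have bs : ∀ k, ∃ C, ∀ t ∈ Icc (0 : ℝ) 1, ∀ s, ‖iteratedDeriv k (fun s => G (s, t)) s‖ ≤ C := by
    intro k
    obtain ⟨C, hC⟩ := hG.bdd_compact k (1, 0) hK
    have hC' : ∀ t ∈ Icc (0 : ℝ) 1, ∀ s ∈ Metric.closedBall s₀ (|R| + 1),
        ‖iteratedDeriv k (fun s => G (s, t)) s‖ ≤ C := by
      intro t ht s hs
      have h1 := hC (s, t) ⟨hs, ht⟩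
      have h2 : (fun r : ℝ => G ((s, t) + r • ((1 : ℝ), (0 : ℝ)))) =
          fun r => (fun s => G (s, t)) (s + r) := by
        ext r; simp
      rw [h2, iteratedDeriv_comp_const_add k (fun s => G (s, t))] at h1
      simpa using h1
    obtain ⟨D, hD⟩ := hG.bdd_compact 0 (1, 0) hK
    refine ⟨max (max C D) 0, fun t ht s => ?_⟩
    by_cases h : s ∈ Metric.closedBall s₀ (|R| + 1)
    · exact (hC' t ht s h).trans ((le_max_left _ _).trans (le_max_left _ _))
    · have he : (fun s => G (s, t)) =ᶠ[𝓝 s] fun _ => G (s₀, t) := by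
        filter_upwards [Metric.isClosed_closedBall.isOpen_compl.mem_nhds h] with r hr
        refine hR r t ?_
        simp only [mem_compl_iff, Metric.mem_closedBall, not_le, Real.dist_eq] at hr
        linarith [le_abs_self R]
      rw [he.iteratedDeriv_eq, iteratedDeriv_const]
      split_ifs
      · have := hD (s₀, t) ⟨hs₀, ht⟩
        simp at this
        exact this.trans ((le_max_right _ _).trans (le_max_left _ _))
      · simp
  have bt : ∀ k, ∃ C, ∀ t ∈ Icc (0 : ℝ) 1, ∀ s, ‖iteratedDeriv k (fun t => G (s, t)) t‖ ≤ C := by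
    intro k
    obtain ⟨C, hC⟩ := hG.bdd_compact k (0, 1) hK
    have hC' : ∀ t ∈ Icc (0 : ℝ) 1, ∀ s ∈ Metric.closedBall s₀ (|R| + 1),
        ‖iteratedDeriv k (fun t => G (s, t)) t‖ ≤ C := by
      intro t ht s hs
      have h1 := hC (s, t) ⟨hs, ht⟩
      have h2 : (fun r : ℝ => G ((s, t) + r • ((0 : ℝ), (1 : ℝ)))) =
          fun r => (fun t => G (s, t)) (t + r) := by
        ext r; simp
      rw [h2, iteratedDeriv_comp_const_add k (fun t => G (s, t))] at h1
      simpa using h1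
    refine ⟨C, fun t ht s => ?_⟩
    by_cases h : s ∈ Metric.closedBall s₀ (|R| + 1)
    · exact hC' t ht s h
    · have : (fun t => G (s, t)) = fun t => G (s₀, t) := by
        ext t
        refine hR s t ?_
        simp only [Metric.mem_closedBall, not_le, Real.dist_eq] at h
        linarith [le_abs_self R]
      rw [this]
      exact hC' t ht s₀ hs₀
  set h : ℝ → F := fun s => deriv (fun t => G (s, t)) 0 with hh
  set u : ℕ → ℝ → F := fun j s => (2 : ℝ) ^ j • (G (s, (1 / 2) ^ j) - G (s, 0)) with hu
  have hmem : ∀ j : ℕ, ((1 / 2 : ℝ) ^ j) ∈ Icc (0 : ℝ) 1 := fun j =>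
    ⟨by positivity, pow_le_one₀ (by norm_num) (by norm_num)⟩
  have h21 : ∀ j : ℕ, (2 : ℝ) ^ j * (1 / 2) ^ j = 1 := fun j => by rw [← mul_pow]; norm_num
  have hu_sm : ∀ j, ContDiff ℝ ∞ (u j) := fun j => ((hs _).sub (hs _)).const_smul _
  obtain ⟨C, hC⟩ := bt 2
  have hC0 : 0 ≤ C := (norm_nonneg _).trans (hC 0 ⟨le_rfl, zero_le_one⟩ 0)
  have huh : ∀ j s, ‖u j s - h s‖ ≤ C * (1 / 2) ^ j := by
    intro j s
    have := taylor2 (u := fun t => G (s, t)) (r := (1 / 2 : ℝ) ^ j) (B := C) (hmem j).1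
      (fun t _ => (by exact_mod_cast (contDiff_infty.1 (ht s) 2).contDiffAt))
      (fun t htt => hC t ⟨htt.1, htt.2.trans (hmem j).2⟩ s)
    have e : u j s - h s = (2 : ℝ) ^ j • (G (s, (1 / 2) ^ j) - G (s, 0) - (1 / 2 : ℝ) ^ j • h s) := by
      simp only [hu]
      rw [smul_sub _ _ ((1 / 2 : ℝ) ^ j • h s), smul_smul, h21, one_smul]
    rw [e, norm_smul, Real.norm_of_nonneg (by positivity)]
    calc (2 : ℝ) ^ j * _ ≤ 2 ^ j * (C * ((1 / 2) ^ j) ^ 2) := by gcongr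
      _ = _ := by linear_combination (C * (1 / 2) ^ j) * h21 j
  set d : ℕ → ℝ → F := fun j s => u (j + 1) s - u j s with hd
  have hd_sm : ∀ j, ContDiff ℝ ∞ (d j) := fun j => (hu_sm _).sub (hu_sm _)
  have hd_dec : ∀ j s, ‖d j s‖ ≤ (2 * C) * (1 / 2) ^ j := by
    intro j s
    calc ‖d j s‖ = ‖(u (j + 1) s - h s) - (u j s - h s)‖ := by simp [hd]
      _ ≤ C * (1 / 2) ^ (j + 1) + C * (1 / 2) ^ j :=
          (norm_sub_le _ _).trans (add_le_add (huh _ _) (huh _ _))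
      _ ≤ _ := by
          have : (0 : ℝ) ≤ C * (1 / 2) ^ j := by positivity
          rw [pow_succ]; linarith
  have hcda : ∀ {w : ℝ → F} (_ : ContDiff ℝ ∞ w) (k : ℕ) (s : ℝ), ContDiffAt ℝ k w s :=
    fun hw k s => (contDiff_infty.1 hw k).contDiffAt
  have hd_bd : ∀ k : ℕ, ∃ C : ℝ, ∀ j s, ‖iteratedDeriv k (d j) s‖ ≤ C * 2 ^ j := by
    intro k
    obtain ⟨B, hB⟩ := bs k
    have hub : ∀ j s, ‖iteratedDeriv k (u j) s‖ ≤ 2 ^ j * (B + B) := by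
      intro j s
      have e : iteratedDeriv k (u j) s = (2 : ℝ) ^ j •
          (iteratedDeriv k (fun s => G (s, (1 / 2) ^ j)) s - iteratedDeriv k (fun s => G (s, 0)) s) := by
        rw [← iteratedDeriv_fun_sub (hcda (hs _) k s) (hcda (hs _) k s)]
        exact iteratedDeriv_const_smul_field _ _
      rw [e, norm_smul, Real.norm_of_nonneg (by positivity)]
      gcongr
      exact (norm_sub_le _ _).trans (add_le_add (hB _ (hmem j) s) (hB _ ⟨le_rfl, zero_le_one⟩ s))
    refine ⟨6 * B, fun j s => ?_⟩
    have e : iteratedDeriv k (d j) s = iteratedDeriv k (u (j + 1)) s - iteratedDeriv k (u j) s :=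
      iteratedDeriv_fun_sub (hcda (hu_sm _) k s) (hcda (hu_sm _) k s)
    rw [e]
    refine (norm_sub_le _ _).trans ((add_le_add (hub _ _) (hub _ _)).trans_eq ?_)
    rw [pow_succ]; ring
  have hdec : ∀ n, ∃ C q : ℝ, 0 < q ∧ q < 1 ∧ ∀ j s, ‖iteratedDeriv n (d j) s‖ ≤ C * q ^ j :=
    fun n => decay_iteratedDeriv n hd_sm two_pos hd_bd
      ⟨2 * C, 1 / 2, by norm_num, by norm_num, hd_dec⟩
  choose A q hq0 hq1 hA using hdec
  have hsum : ContDiff ℝ ∞ (fun s => ∑' j, d j s) := by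
    refine contDiff_tsum (v := fun k j => A k * q k ^ j) hd_sm (fun k _ => ?_) (fun k j s _ => ?_)
    · exact (summable_geometric_of_lt_one (hq0 k).le (hq1 k)).mul_left _
    · rw [norm_iteratedFDeriv_eq_norm_iteratedDeriv]
      exact hA k j s
  have heq : h = fun s => u 0 s + ∑' j, d j s := by
    ext s
    have hsm : Summable fun j => d j s :=
      Summable.of_norm_bounded ((summable_geometric_two).mul_left (2 * C)) (fun j => hd_dec j s)
    have h1 := hsm.hasSum.tendsto_sum_nat
    have h2 : Tendsto (fun n => u n s) atTop (𝓝 (h s)) := by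
      rw [tendsto_iff_norm_sub_tendsto_zero]
      refine squeeze_zero (fun _ => norm_nonneg _) (fun n => huh n s) ?_
      simpa using (tendsto_pow_atTop_nhds_zero_of_lt_one (r := (1 / 2 : ℝ)) (by norm_num)
        (by norm_num)).const_mul C
    have h3 : (fun n => ∑ j ∈ Finset.range n, d j s) = fun n => u n s - u 0 s := by
      ext n
      exact Finset.sum_range_sub (fun n => u n s) n
    rw [h3] at h1
    rw [tendsto_nhds_unique h1 (h2.sub_const _)]
    abel
  rw [heq]
  exact (hu_sm 0).add hsum

lemma ArcSm.lineDeriv [CompleteSpace F] {U : Set E} (hU : IsOpen U) {f : E → F}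
    (hf : ArcSm f U) : ArcSm (fun p : E × E => lineDeriv ℝ f p.1 p.2) (U ×ˢ univ) := by
  intro c hc s₀ hs₀
  have hc1 : ContDiff ℝ ∞ fun s => (c s).1 := contDiff_fst.comp hc
  have hc2 : ContDiff ℝ ∞ fun s => (c s).2 := contDiff_snd.comp hc
  let Φ : ℝ × ℝ → E := fun p => (c p.1).1 + p.2 • (c p.1).2
  have hΦ : ContDiff ℝ ∞ Φ :=
    (hc1.comp contDiff_fst).add (contDiff_snd.smul (hc2.comp contDiff_fst))
  have hmem : ((s₀, 0) : ℝ × ℝ) ∈ Φ ⁻¹' U := by simpa [Φ] using hs₀.1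
  obtain ⟨δ, hδ, hb⟩ := Metric.isOpen_iff.1 (hU.preimage hΦ.continuous) _ hmem
  obtain ⟨θ, t1, t2, t3, t4⟩ := exists_theta s₀ δ hδ
  obtain ⟨η, n1, n2, n3, -⟩ := exists_theta 0 δ hδ
  let G : ℝ × ℝ → F := fun p => f (Φ (θ p.1, η p.2))
  have hG : ArcSm G univ := by
    have h1 := hf.comp (φ := fun p : ℝ × ℝ => Φ (θ p.1, η p.2))
      (hΦ.comp ((t1.comp contDiff_fst).prodMk (n1.comp contDiff_snd)))
    refine h1.mono fun p _ => hb ?_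
    rw [Metric.mem_ball, Prod.dist_eq, max_lt_iff]
    exact ⟨t3 _, n3 _⟩
  have hcore := core hG (s₀ := s₀) (R := δ) (fun s t h => by
    simp only [G, t4 s h, t2.self_of_nhds])
  refine hcore.contDiffAt.congr_of_eventuallyEq ?_
  filter_upwards [t2] with s hs
  simp only [Function.comp, _root_.lineDeriv, G, hs]
  refine Filter.EventuallyEq.deriv_eq ?_
  filter_upwards [n2] with t ht
  simp [ht, Φ]

end core
end Boman

namespace Boman
open Set Filter Topology
open scoped ContDiff
set_option linter.unusedSectionVars false

section frechet
variable {E F : Type*} [NormedAddCommGroup E] [NormedSpace ℝ E]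
  [NormedAddCommGroup F] [NormedSpace ℝ F]

/-- Writing a vector as a controlled multiple of a small vector. -/
lemma exists_scale (ρ : ℝ) (hρ : 0 < ρ) (h : E) : ∃ (l : ℝ) (h' : E), 0 ≤ l ∧ l = 2 / ρ * ‖h‖ ∧
    h = l • h' ∧ ‖h'‖ < ρ := by
  by_cases h0 : h = 0
  · exact ⟨0, 0, le_rfl, by simp [h0], by simp [h0], by simpa using hρ⟩
  have hn : 0 < ‖h‖ := norm_pos_iff.2 h0
  refine ⟨2 / ρ * ‖h‖, (2 / ρ * ‖h‖)⁻¹ • h, by positivity, rfl, ?_, ?_⟩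
  · rw [smul_smul, mul_inv_cancel₀ (by positivity), one_smul]
  · rw [norm_smul, Real.norm_of_nonneg (by positivity)]
    field_simp
    linarith

lemma ArcSm.dir_bound {U : Set E} (hU : IsOpen U) {f : E → F} (hf : ArcSm f U) (k : ℕ)
    {x : E} (hx : x ∈ U) : ∃ C ρ : ℝ, 0 ≤ C ∧ 0 < ρ ∧ Metric.ball x ρ ⊆ U ∧
    ∀ y ∈ Metric.ball x ρ, ∀ h : E,
      ‖iteratedDeriv k (fun t : ℝ => f (y + t • h)) 0‖ ≤ C * ‖h‖ ^ k := by
  let Φ : E × E × ℝ → E := fun p => p.1 + p.2.2 • p.2.1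
  have hΦ : ContDiff ℝ ∞ Φ := by fun_prop
  have h1 := (hf.comp hΦ).bdd (hU.preimage hΦ.continuous) k ((0, 0, 1) : E × E × ℝ)
    (x := (x, 0, 0)) (by simpa [Φ] using hx)
  obtain ⟨C, hC⟩ := h1
  obtain ⟨ρ, hρ, hb⟩ := Metric.eventually_nhds_iff_ball.1 hC
  obtain ⟨σ, hσ, hb'⟩ := Metric.isOpen_iff.1 hU x hx
  have key : ∀ y ∈ Metric.ball x ρ, ∀ h : E, ‖h‖ < ρ →
      ‖iteratedDeriv k (fun t : ℝ => f (y + t • h)) 0‖ ≤ C := by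
    intro y hy h hh
    have := hb (y, h, 0) (by
      rw [Metric.mem_ball, Prod.dist_eq, Prod.dist_eq]
      simpa [hρ] using ⟨hy, hh⟩)
    simpa [Φ, Function.comp_def] using this
  have hC0 : 0 ≤ C := (norm_nonneg _).trans (key x (Metric.mem_ball_self hρ) 0 (by simpa using hρ))
  refine ⟨C * (2 / ρ) ^ k, min ρ σ, by positivity, lt_min hρ hσ,
    (Metric.ball_subset_ball (min_le_right _ _)).trans hb', fun y hy h => ?_⟩
  obtain ⟨l, h', hl0, hl, he, hlt⟩ := exists_scale ρ hρ h
  have e1 : (fun t : ℝ => f (y + t • h)) = fun t => (fun r => f (y + r • h')) (l * t) := by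
    ext t
    conv_lhs => rw [he]
    simp only [smul_smul, mul_comm]
  rw [e1, iteratedDeriv_scale k (fun r : ℝ => f (y + r • h')), mul_zero, norm_smul, norm_pow,
    Real.norm_of_nonneg hl0]
  calc l ^ k * _ ≤ l ^ k * C := by
        gcongr
        exact key y (Metric.ball_subset_ball (min_le_left _ _) hy) h' hlt
    _ = _ := by rw [hl, mul_pow]; ring

lemma ArcSm.cda {U : Set E} {f : E → F} (hf : ArcSm f U) {y h : E} {t : ℝ} (ht : y + t • h ∈ U) :
    ContDiffAt ℝ ∞ (fun t : ℝ => f (y + t • h)) t :=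
  hf (fun t => y + t • h) (by fun_prop) t ht

lemma ArcSm.est2 {U : Set E} (hU : IsOpen U) {f : E → F} (hf : ArcSm f U)
    {x : E} (hx : x ∈ U) : ∃ C ρ : ℝ, 0 ≤ C ∧ 0 < ρ ∧
    ∀ y h : E, ‖y - x‖ < ρ → ‖h‖ < ρ →
      ‖f (y + h) - f y - _root_.lineDeriv ℝ f y h‖ ≤ C * ‖h‖ ^ 2 := by
  obtain ⟨C, ρ, hC, hρ, hb, hk⟩ := hf.dir_bound hU 2 hx
  refine ⟨C, ρ / 2, hC, by linarith, fun y h hy hh => ?_⟩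
  have hball : ∀ t ∈ Icc (0 : ℝ) 1, y + t • h ∈ Metric.ball x ρ := by
    intro t ht
    rw [Metric.mem_ball, dist_eq_norm]
    calc ‖y + t • h - x‖ = ‖(y - x) + t • h‖ := by congr 1; abel
      _ ≤ ‖y - x‖ + ‖t • h‖ := norm_add_le _ _
      _ ≤ ‖y - x‖ + 1 * ‖h‖ := by
          rw [norm_smul, Real.norm_of_nonneg ht.1]; gcongr; exact ht.2
      _ < ρ := by linarith
  have := taylor2 (u := fun t : ℝ => f (y + t • h)) (r := 1) (B := C * ‖h‖ ^ 2) zero_le_one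
    (fun t ht => by exact_mod_cast contDiffAt_infty.1 (hf.cda (hb (hball t ht))) 2)
    (fun t ht => by
      have h1 := hk _ (hball t ht) h
      have e : (fun r : ℝ => f (y + t • h + r • h)) =
          fun r => (fun t => f (y + t • h)) (t + r) := by
        ext r; simp [add_smul, add_assoc]
      rw [e, iteratedDeriv_comp_const_add 2 (fun t : ℝ => f (y + t • h))] at h1
      simpa using h1)
  simpa [_root_.lineDeriv] using this

lemma ArcSm.est1 [CompleteSpace F] {U : Set E} (hU : IsOpen U) {f : E → F} (hf : ArcSm f U)
    {x : E} (hx : x ∈ U) : ∃ C ρ : ℝ, 0 ≤ C ∧ 0 < ρ ∧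
    ∀ y z : E, ‖y - x‖ < ρ → ‖z - x‖ < ρ → ∀ v,
      ‖_root_.lineDeriv ℝ f z v - _root_.lineDeriv ℝ f y v‖ ≤ C * ‖v‖ * ‖z - y‖ := by
  have hD := hf.lineDeriv hU
  have hxx : ((x, 0) : E × E) ∈ U ×ˢ univ := ⟨hx, mem_univ _⟩
  obtain ⟨C, ρ, hC, hρ, hb, hk⟩ := hD.dir_bound (hU.prod isOpen_univ) 1 hxx
  have key : ∀ y z : E, ‖y - x‖ < ρ → ‖z - x‖ < ρ → ∀ v, ‖v‖ < ρ → 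
      ‖_root_.lineDeriv ℝ f z v - _root_.lineDeriv ℝ f y v‖ ≤ C * ‖z - y‖ := by
    intro y z hy hz v hv
    have hball : ∀ t ∈ Icc (0 : ℝ) 1, (y, v) + t • (z - y, (0 : E)) ∈ Metric.ball (x, (0 : E)) ρ := by
      intro t ht
      have h1 : y + t • (z - y) ∈ Metric.ball x ρ :=
        (convex_ball x ρ).add_smul_sub_mem (by simpa [dist_eq_norm] using hy)
          (by simpa [dist_eq_norm] using hz) ht
      rw [Metric.mem_ball, Prod.dist_eq, max_lt_iff]
      exact ⟨by simpa using h1, by simpa using hv⟩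
    have hder : ∀ t ∈ Icc (0 : ℝ) 1, HasDerivAt (fun t : ℝ => _root_.lineDeriv ℝ f
        ((y, v) + t • (z - y, (0 : E))).1 ((y, v) + t • (z - y, (0 : E))).2)
        (iteratedDeriv 1 (fun t : ℝ => _root_.lineDeriv ℝ f
        ((y, v) + t • (z - y, (0 : E))).1 ((y, v) + t • (z - y, (0 : E))).2) t) t := by
      intro t ht
      rw [iteratedDeriv_one]
      exact ((hD.cda (hb (hball t ht))).differentiableAt (by simp)).hasDerivAt
    have := norm_image_sub_le_of_norm_deriv_le_segment_01' (C := C * ‖z - y‖)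
      (fun t ht => (hder t ht).hasDerivWithinAt) (fun t ht => by
      have ht := Ico_subset_Icc_self ht
      have h1 := hk _ (hball t ht) (z - y, 0)
      have e : (fun r : ℝ => _root_.lineDeriv ℝ f ((y, v) + t • (z - y, (0 : E)) + r • (z - y, (0 : E))).1
          ((y, v) + t • (z - y, (0 : E)) + r • (z - y, (0 : E))).2) =
          fun r => (fun t : ℝ => _root_.lineDeriv ℝ f
        ((y, v) + t • (z - y, (0 : E))).1 ((y, v) + t • (z - y, (0 : E))).2) (t + r) := by
        ext r; simp [add_smul, add_assoc]
      rw [e, iteratedDeriv_comp_const_add 1 (fun t : ℝ => _root_.lineDeriv ℝ f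
        ((y, v) + t • (z - y, (0 : E))).1 ((y, v) + t • (z - y, (0 : E))).2)] at h1
      simpa [Prod.norm_def] using h1)
    simpa using this
  refine ⟨C * (2 / ρ), ρ, by positivity, hρ, fun y z hy hz v => ?_⟩
  obtain ⟨l, h', hl0, hl, he, hlt⟩ := exists_scale ρ hρ v
  calc ‖_root_.lineDeriv ℝ f z v - _root_.lineDeriv ℝ f y v‖
      = l * ‖_root_.lineDeriv ℝ f z h' - _root_.lineDeriv ℝ f y h'‖ := by
        rw [he, lineDeriv_smul, lineDeriv_smul, ← smul_sub, norm_smul, Real.norm_of_nonneg hl0]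
    _ ≤ l * (C * ‖z - y‖) := by gcongr; exact key y z hy hz h' hlt
    _ = _ := by rw [hl]; ring

lemma ArcSm.lineDeriv_add [CompleteSpace F] {U : Set E} (hU : IsOpen U) {f : E → F}
    (hf : ArcSm f U) {x : E} (hx : x ∈ U) (v w : E) :
    _root_.lineDeriv ℝ f x (v + w) = _root_.lineDeriv ℝ f x v + _root_.lineDeriv ℝ f x w := by
  obtain ⟨C, ρ, hC, hρ, h2⟩ := hf.est2 hU hx
  obtain ⟨C', ρ', hC', hρ', h1⟩ := hf.est1 hU hx
  set D := _root_.lineDeriv ℝ f with hD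
  set K := C * ‖v + w‖ ^ 2 + C * ‖v‖ ^ 2 + C * ‖w‖ ^ 2 + C' * ‖w‖ * ‖v‖
  have hsmall : ∀ (a : ℝ), 0 < a → ∀ z : E, ∀ᶠ t in 𝓝[>] (0 : ℝ), ‖t • z‖ < a := by
    intro a ha z
    have : Tendsto (fun t : ℝ => ‖t • z‖) (𝓝 0) (𝓝 0) := by
      have h : Continuous fun t : ℝ => ‖t • z‖ := by fun_prop
      simpa using h.tendsto 0
    exact (this.eventually (gt_mem_nhds ha)).filter_mono nhdsWithin_le_nhds
  have hev : ∀ᶠ t in 𝓝[>] (0 : ℝ), ‖D x (v + w) - D x v - D x w‖ ≤ t * K := by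
    filter_upwards [hsmall ρ hρ v, hsmall ρ hρ w, hsmall ρ hρ (v + w), hsmall ρ' hρ' v,
      self_mem_nhdsWithin] with t hv hw hvw hv' ht
    have ht : 0 < t := ht
    have a1 := h2 x (t • (v + w)) (by simpa using hρ) hvw
    have a2 := h2 x (t • v) (by simpa using hρ) hv
    have a3 := h2 (x + t • v) (t • w) (by simpa using hv) hw
    have a4 := h1 x (x + t • v) (by simpa using hρ') (by simpa using hv') w
    have hsm : ∀ (y z : E), D y (t • z) = t • D y z := fun y z => lineDeriv_smul
    rw [hsm] at a1 a2 a3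
    have e : t • (D x (v + w) - D x v - D x w) =
        -(f (x + t • (v + w)) - f x - t • D x (v + w)) + (f (x + t • v) - f x - t • D x v)
        + (f (x + t • v + t • w) - f (x + t • v) - t • D (x + t • v) w)
        + t • (D (x + t • v) w - D x w) := by
      rw [smul_add, ← add_assoc, smul_sub, smul_sub, smul_sub]; abel
    have a5 : ‖t • (D x (v + w) - D x v - D x w)‖ ≤ C * ‖t • (v + w)‖ ^ 2 + C * ‖t • v‖ ^ 2 +
        C * ‖t • w‖ ^ 2 + t * (C' * ‖w‖ * ‖x + t • v - x‖) := by
      rw [e]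
      refine (norm_add_le _ _).trans (add_le_add ((norm_add_le _ _).trans (add_le_add
        ((norm_add_le _ _).trans (add_le_add ?_ a2)) a3)) ?_)
      · rw [norm_neg]; exact a1
      · rw [norm_smul, Real.norm_of_nonneg ht.le]; gcongr
    rw [add_sub_cancel_left] at a5
    simp only [norm_smul, Real.norm_of_nonneg ht.le] at a5
    refine le_of_mul_le_mul_left (a5.trans_eq ?_) ht
    simp only [K]; ring
  have hlim : Tendsto (fun t : ℝ => t * K) (𝓝[>] (0 : ℝ)) (𝓝 0) := by
    have h : Continuous fun t : ℝ => t * K := by fun_prop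
    have := h.tendsto 0
    rw [zero_mul] at this
    exact this.mono_left nhdsWithin_le_nhds
  have h0 := ge_of_tendsto hlim hev
  have h3 := norm_le_zero_iff.1 h0
  rw [sub_sub, sub_eq_zero] at h3
  exact h3

lemma ArcSm.hasFDerivAt [CompleteSpace F] {U : Set E} (hU : IsOpen U) {f : E → F}
    (hf : ArcSm f U) {x : E} (hx : x ∈ U) :
    ∃ L : E →L[ℝ] F, HasFDerivAt f L x := by
  obtain ⟨C, ρ, hC, hρ, hb, hk⟩ := hf.dir_bound hU 1 hx
  let L : E →L[ℝ] F := LinearMap.mkContinuous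
    { toFun := fun v => _root_.lineDeriv ℝ f x v
      map_add' := hf.lineDeriv_add hU hx
      map_smul' := fun c v => lineDeriv_smul } C (fun v => by
        have := hk x (Metric.mem_ball_self hρ) v
        simpa [_root_.lineDeriv] using this)
  refine ⟨L, ?_⟩
  obtain ⟨C, ρ, hC, hρ, h2⟩ := hf.est2 hU hx
  rw [hasFDerivAt_iff_isLittleO_nhds_zero]
  have hO : (fun h : E => f (x + h) - f x - L h) =O[𝓝 0] fun h => ‖h‖ ^ 2 := by
    refine Asymptotics.IsBigO.of_bound C ?_
    filter_upwards [Metric.ball_mem_nhds (0 : E) hρ] with h hh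
    simpa [L] using h2 x h (by simpa using hρ) (by simpa using hh)
  refine hO.trans_isLittleO ?_
  exact Asymptotics.isLittleO_norm_pow_id one_lt_two

end frechet
end Boman

namespace Boman
open Set Filter Topology
open scoped ContDiff
set_option linter.unusedSectionVars false

section curveop
variable {E F : Type*} [NormedAddCommGroup E] [NormedSpace ℝ E]
  [NormedAddCommGroup F] [NormedSpace ℝ F]

lemma ArcSm.congr {U : Set E} (hU : IsOpen U) {f f' : E → F} (hf : ArcSm f U)
    (h : ∀ x ∈ U, f' x = f x) : ArcSm f' U := by
  intro c hc t ht
  refine (hf c hc t ht).congr_of_eventuallyEq ?_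
  filter_upwards [(hU.preimage hc.continuous).mem_nhds ht] with s hs
  exact h _ hs

/-- One derivative of an operator-valued curve that is smooth in the pointwise sense. -/
lemma hasDerivAt_op [CompleteSpace F] {V : Set ℝ} (hV : IsOpen V) {g : ℝ → (E →L[ℝ] F)}
    (hg : ArcSm (fun p : ℝ × E => g p.1 p.2) (V ×ˢ univ)) {s : ℝ} (hs : s ∈ V) :
    ∃ G : E →L[ℝ] F, HasDerivAt g G s ∧
      ∀ v, G v = _root_.lineDeriv ℝ (fun p : ℝ × E => g p.1 p.2) (s, v) (1, 0) := by
  set k : ℝ × E → F := fun p => g p.1 p.2 with hk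
  have hO : IsOpen (V ×ˢ (univ : Set E)) := hV.prod isOpen_univ
  have hmem : ∀ v : E, ((s, v) : ℝ × E) ∈ V ×ˢ (univ : Set E) := fun v => ⟨hs, mem_univ _⟩
  have hder : ∀ v, HasDerivAt (fun t : ℝ => g (s + t) v)
      (_root_.lineDeriv ℝ k (s, v) (1, 0)) 0 := by
    intro v
    have h1 : ContDiffAt ℝ ∞ (fun t : ℝ => k ((s, v) + t • ((1 : ℝ), (0 : E)))) 0 :=
      hg.cda (by simpa using hs)
    have h2 := (h1.differentiableAt (by simp)).hasDerivAt
    simpa [k, _root_.lineDeriv] using h2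
  obtain ⟨C, ρ, hC, hρ, hb, hkb⟩ := hg.dir_bound hO 1 (hmem 0)
  have hsm : ∀ (c : ℝ) (v : E), _root_.lineDeriv ℝ k (s, c • v) (1, 0) =
      c • _root_.lineDeriv ℝ k (s, v) (1, 0) := by
    intro c v
    have h1 := (hder v).const_smul c
    have h2 := hder (c • v)
    simp only [map_smul] at h2
    exact h2.unique h1
  have hbd : ∀ v, ‖_root_.lineDeriv ℝ k (s, v) (1, 0)‖ ≤ C * (2 / ρ) * ‖v‖ := by
    intro v
    obtain ⟨l, h', hl0, hl, he, hlt⟩ := exists_scale ρ hρ v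
    have h1 := hkb (s, h') (by
      rw [Metric.mem_ball, Prod.dist_eq, max_lt_iff]
      exact ⟨by simpa using hρ, by simpa using hlt⟩) (1, 0)
    have h1 : ‖_root_.lineDeriv ℝ k (s, h') (1, 0)‖ ≤ C := by
      simpa [_root_.lineDeriv, k, Prod.norm_def] using h1
    rw [he, hsm, norm_smul, Real.norm_of_nonneg hl0, ← he]
    calc l * _ ≤ l * C := by gcongr
      _ = _ := by rw [hl]; ring
  let G : E →L[ℝ] F := LinearMap.mkContinuous
    { toFun := fun v => _root_.lineDeriv ℝ k (s, v) (1, 0)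
      map_add' := fun v w => by
        have h1 := (hder v).add (hder w)
        have h2 := hder (v + w)
        simp only [map_add] at h2
        exact h2.unique h1
      map_smul' := hsm } (C * (2 / ρ)) hbd
  refine ⟨G, ?_, fun v => rfl⟩
  obtain ⟨C, ρ, hC, hρ, h2⟩ := hg.est2 hO (hmem 0)
  have hest : ∀ r : ℝ, |r| < ρ → ‖g (s + r) - g s - r • G‖ ≤ C * (2 / ρ) * |r| ^ 2 := by
    intro r hr
    refine ContinuousLinearMap.opNorm_le_bound _ (by positivity) fun v => ?_
    obtain ⟨l, h', hl0, hl, he, hlt⟩ := exists_scale ρ hρ v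
    have h1 := h2 (s, h') (r, 0) (by
      rw [Prod.norm_def, max_lt_iff]
      exact ⟨by simpa using hρ, by simpa using hlt⟩) (by
      rw [Prod.norm_def, max_lt_iff]
      exact ⟨by simpa using hr, by simpa using hρ⟩)
    have e0 : ((r, 0) : ℝ × E) = r • ((1 : ℝ), (0 : E)) := by simp
    have h1 : ‖(g (s + r) - g s - r • G) h'‖ ≤ C * |r| ^ 2 := by
      have e1 : (g (s + r) - g s - r • G) h' =
          k ((s, h') + (r, 0)) - k (s, h') - _root_.lineDeriv ℝ k (s, h') (r, 0) := by
        rw [e0, lineDeriv_smul]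
        simp [k, G]
      rw [e1]
      simpa [Prod.norm_def] using h1
    rw [he, map_smul, norm_smul, Real.norm_of_nonneg hl0, ← he]
    calc l * _ ≤ l * (C * |r| ^ 2) := by gcongr
      _ = _ := by rw [hl]; ring
  rw [hasDerivAt_iff_isLittleO_nhds_zero]
  have hO' : (fun h : ℝ => g (s + h) - g s - h • G) =O[𝓝 0] fun h => ‖h‖ ^ 2 := by
    refine Asymptotics.IsBigO.of_bound (C * (2 / ρ)) ?_
    filter_upwards [Metric.ball_mem_nhds (0 : ℝ) hρ] with h hh
    simpa using hest h (by simpa using hh)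
  exact hO'.trans_isLittleO (Asymptotics.isLittleO_norm_pow_id one_lt_two)

lemma contDiffOn_op [CompleteSpace F] {V : Set ℝ} (hV : IsOpen V) (n : ℕ) :
    ∀ {g : ℝ → (E →L[ℝ] F)},
    ArcSm (fun p : ℝ × E => g p.1 p.2) (V ×ˢ univ) → ContDiffOn ℝ n g V := by
  induction n with
  | zero =>
    intro g hg
    rw [Nat.cast_zero, contDiffOn_zero]
    intro s hs
    obtain ⟨G, hG, -⟩ := hasDerivAt_op hV hg hs
    exact hG.continuousAt.continuousWithinAt
  | succ n ih =>
    intro g hg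
    rw [Nat.cast_succ, contDiffOn_succ_iff_deriv_of_isOpen hV]
    refine ⟨fun s hs => ?_, by simp, ih ?_⟩
    · obtain ⟨G, hG, -⟩ := hasDerivAt_op hV hg hs
      exact hG.differentiableAt.differentiableWithinAt
    · have hO : IsOpen (V ×ˢ (univ : Set E)) := hV.prod isOpen_univ
      have h1 := (hg.lineDeriv hO).comp (φ := fun p : ℝ × E => (p, ((1 : ℝ), (0 : E))))
        (by fun_prop)
      refine (h1.mono ?_).congr hO ?_
      · intro p hp
        exact ⟨hp, mem_univ _⟩
      · rintro ⟨s, v⟩ ⟨hs, -⟩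
        obtain ⟨G, hG, hG'⟩ := hasDerivAt_op hV hg hs
        simp only [hG.deriv, hG', Function.comp]

lemma ArcSm.fderiv [CompleteSpace F] {U : Set E} (hU : IsOpen U) {f : E → F} (hf : ArcSm f U) :
    ArcSm (_root_.fderiv ℝ f) U := by
  intro c hc t ht
  have hV : IsOpen (c ⁻¹' U) := hU.preimage hc.continuous
  have hO : IsOpen ((c ⁻¹' U) ×ˢ (univ : Set E)) := hV.prod isOpen_univ
  have h1 : ArcSm (fun p : ℝ × E => (_root_.fderiv ℝ f ∘ c) p.1 p.2) ((c ⁻¹' U) ×ˢ univ) := by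
    have h2 := (hf.lineDeriv hU).comp (φ := fun p : ℝ × E => (c p.1, p.2))
        (by fun_prop)
    refine (h2.mono ?_).congr hO ?_
    · intro p hp
      exact ⟨hp.1, mem_univ _⟩
    · rintro ⟨s, v⟩ ⟨hs, -⟩
      obtain ⟨L, hL⟩ := hf.hasFDerivAt hU hs
      simp only [Function.comp]
      exact (hL.differentiableAt.lineDeriv_eq_fderiv).symm
  rw [contDiffAt_infty]
  intro n
  exact (contDiffOn_op hV n h1).contDiffAt (hV.mem_nhds ht)

end curveop

universe u v

lemma contDiffOn_complete_nat {E : Type u} [NormedAddCommGroup E] [NormedSpace ℝ E]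
    {U : Set E} (hU : IsOpen U) (n : ℕ) :
    ∀ {F : Type max u v} [NormedAddCommGroup F] [NormedSpace ℝ F] [CompleteSpace F]
      {f : E → F}, ArcSm f U → ContDiffOn ℝ n f U := by
  induction n with
  | zero =>
    intro F _ _ _ f hf
    rw [Nat.cast_zero, contDiffOn_zero]
    intro x hx
    obtain ⟨L, hL⟩ := hf.hasFDerivAt hU hx
    exact hL.continuousAt.continuousWithinAt
  | succ n ih =>
    intro F _ _ _ f hf
    rw [Nat.cast_succ, contDiffOn_succ_iff_fderiv_of_isOpen hU]
    refine ⟨fun x hx => ?_, by simp, ih (hf.fderiv hU)⟩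
    obtain ⟨L, hL⟩ := hf.hasFDerivAt hU hx
    exact hL.differentiableAt.differentiableWithinAt

end Boman

namespace Boman
open Set Filter Topology
open scoped ContDiff
set_option linter.unusedSectionVars false

section polar
variable {E G : Type*}

lemma polarization [AddCommGroup E] [Module ℝ E] [AddCommGroup G] [Module ℝ G] {k : ℕ}
    (W : Submodule ℝ G) (M : MultilinearMap ℝ (fun _ : Fin k => E) G)
    (hs : ∀ (σ : Equiv.Perm (Fin k)) (v : Fin k → E), M (v ∘ σ) = M v)
    (hd : ∀ v, M (fun _ => v) ∈ W) (v : Fin k → E) : M v ∈ W := by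
  by_contra hv
  obtain ⟨φ, hφ, hW⟩ := Submodule.exists_le_ker_of_notMem hv
  let p : MvPolynomial (Fin k) ℝ := ∑ r : Fin k → Fin k,
    MvPolynomial.monomial (∑ i, Finsupp.single (r i) 1) (φ (M (v ∘ r)))
  have hp : p = 0 := by
    refine MvPolynomial.funext fun t => ?_
    have h1 : φ (M (fun _ => ∑ i, t i • v i)) = 0 := hW (hd _)
    rw [MultilinearMap.map_sum, map_sum] at h1
    rw [map_zero, ← h1]
    simp only [p, map_sum]
    refine Finset.sum_congr rfl fun r _ => ?_
    rw [MultilinearMap.map_smul_univ, map_smul, MvPolynomial.eval_monomial, smul_eq_mul, mul_comm]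
    congr 1
    rw [← Finsupp.prod_finsetSum_index (fun a => pow_zero _) (fun a b c => pow_add _ _ _)]
    simp
  have hc : MvPolynomial.coeff (∑ i : Fin k, Finsupp.single i 1) p = 0 := by rw [hp]; simp
  simp only [p, MvPolynomial.coeff_sum, MvPolynomial.coeff_monomial] at hc
  rw [← Finset.sum_filter] at hc
  have hb : ∀ r ∈ Finset.univ.filter (fun r : Fin k → Fin k =>
      (∑ i, Finsupp.single (r i) 1 : Fin k →₀ ℕ) = ∑ i : Fin k, Finsupp.single i 1),
      φ (M (v ∘ r)) = φ (M v) := by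
    intro r hr
    rw [Finset.mem_filter] at hr
    have hsurj : Function.Surjective r := by
      intro j
      by_contra hj
      push Not at hj
      have := DFunLike.congr_fun hr.2 j
      simp [Finsupp.finsetSum_apply, Finsupp.single_apply, hj] at this
    have hbij : Function.Bijective r := Finite.surjective_iff_bijective.1 hsurj
    have := hs (Equiv.ofBijective r hbij) v
    rw [← this]; rfl
  rw [Finset.sum_congr rfl hb, Finset.sum_const, nsmul_eq_mul, mul_eq_zero] at hc
  rcases hc with hc | hc
  · rw [Nat.cast_eq_zero, Finset.card_eq_zero, Finset.filter_eq_empty_iff] at hc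
    exact hc (Finset.mem_univ id) rfl
  · exact hφ hc

variable [NormedAddCommGroup E] [NormedSpace ℝ E] [NormedAddCommGroup G] [NormedSpace ℝ G]

lemma cd_iter {U : Set E} (hU : IsOpen U) {g : E → G} (hg : ContDiffOn ℝ ∞ g U) (k : ℕ)
    {x : E} (hx : x ∈ U) : ContDiffAt ℝ ∞ (iteratedFDeriv ℝ k g) x :=
  (hg.contDiffAt (hU.mem_nhds hx)).iteratedFDeriv_right (by exact_mod_cast le_top)

lemma hasFDerivAt_apply2 {M : Type*} [NormedAddCommGroup M] [NormedSpace ℝ M]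
    {D : E → E →L[ℝ] M} {x : E} (hD : DifferentiableAt ℝ D x) (A : M →L[ℝ] G) (w : E) :
    HasFDerivAt (fun y => A (D y w))
      (A.comp ((ContinuousLinearMap.apply ℝ M w).comp (fderiv ℝ D x))) x :=
  A.hasFDerivAt.comp x ((ContinuousLinearMap.apply ℝ M w).hasFDerivAt.comp x hD.hasFDerivAt)

lemma iter_swap {U : Set E} (hU : IsOpen U) {g : E → G} (hg : ContDiffOn ℝ ∞ g U) (n : ℕ) :
    ∀ x ∈ U, ∀ (i : Fin n) (v : Fin (n + 1) → E),
    iteratedFDeriv ℝ (n + 1) g x (v ∘ Equiv.swap i.castSucc i.succ) =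
      iteratedFDeriv ℝ (n + 1) g x v := by
  induction n with
  | zero => intro x hx i; exact i.elim0
  | succ n ih =>
    intro x hx i v
    refine Fin.cases ?_ (fun j => ?_) i
    · have hsym : IsSymmSndFDerivAt ℝ (iteratedFDeriv ℝ n g) x :=
        ContDiffAt.isSymmSndFDerivAt (n := 2)
          (by exact_mod_cast contDiffAt_infty.1 (cd_iter hU hg n hx) 2) (by simp)
      have key : ∀ w : Fin (n + 2) → E, iteratedFDeriv ℝ (n + 1 + 1) g x w =
          fderiv ℝ (fderiv ℝ (iteratedFDeriv ℝ n g)) x (w 0) (w 1) (Fin.tail (Fin.tail w)) := by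
        intro w
        rw [iteratedFDeriv_succ_apply_left]
        have hd : DifferentiableAt ℝ (iteratedFDeriv ℝ (n + 1) g) x :=
          (cd_iter hU hg (n + 1) hx).differentiableAt (by simp)
        have hd2 : DifferentiableAt ℝ (fderiv ℝ (iteratedFDeriv ℝ n g)) x :=
          ((cd_iter hU hg n hx).fderiv_right (m := ∞) (by simp)).differentiableAt (by simp)
        have e1 := (ContinuousMultilinearMap.apply ℝ (fun _ : Fin (n + 1) => E) G
          (Fin.tail w)).hasFDerivAt.comp x hd.hasFDerivAt
        have e2 := hasFDerivAt_apply2 hd2 (ContinuousMultilinearMap.apply ℝ (fun _ : Fin n => E) G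
          (Fin.tail (Fin.tail w))) (w 1)
        have e3 := e1.unique e2
        exact DFunLike.congr_fun e3 (w 0)
      rw [key, key, hsym.eq]
      congr 1
    · rw [iteratedFDeriv_succ_apply_left, iteratedFDeriv_succ_apply_left]
      have hd : DifferentiableAt ℝ (iteratedFDeriv ℝ (n + 1) g) x :=
          (cd_iter hU hg (n + 1) hx).differentiableAt (by simp)
      have e1 := fun w => (ContinuousMultilinearMap.apply ℝ (fun _ : Fin (n + 1) => E) G
          w).hasFDerivAt.comp x hd.hasFDerivAt
      have ht : Fin.tail (v ∘ Equiv.swap j.succ.castSucc j.succ.succ) =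
          Fin.tail v ∘ Equiv.swap j.castSucc j.succ := by
        ext a
        simp only [Fin.tail, Function.comp]
        congr 1
        rw [← Fin.succ_castSucc, (Fin.succ_injective _).swap_apply]
      have h0 : (v ∘ Equiv.swap j.succ.castSucc j.succ.succ) 0 = v 0 := by
        simp only [Function.comp]
        congr 1
      rw [ht, h0]
      have e2 := (e1 (Fin.tail v ∘ Equiv.swap j.castSucc j.succ)).congr_of_eventuallyEq
        (f₁ := (ContinuousMultilinearMap.apply ℝ (fun _ : Fin (n + 1) => E) G
          (Fin.tail v)) ∘ iteratedFDeriv ℝ (n + 1) g) (by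
          filter_upwards [hU.mem_nhds hx] with y hy
          exact (ih y hy j _).symm)
      exact DFunLike.congr_fun (e2.unique (e1 (Fin.tail v))) (v 0)

lemma iter_perm {U : Set E} (hU : IsOpen U) {g : E → G} (hg : ContDiffOn ℝ ∞ g U) (n : ℕ)
    {x : E} (hx : x ∈ U) (σ : Equiv.Perm (Fin n)) (v : Fin n → E) :
    iteratedFDeriv ℝ n g x (v ∘ σ) = iteratedFDeriv ℝ n g x v := by
  cases n with
  | zero => congr 1; exact Subsingleton.elim _ _
  | succ n =>
    have hσ : σ ∈ Submonoid.closure (Set.range fun i : Fin n =>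
        Equiv.swap i.castSucc i.succ) := by
      rw [Equiv.Perm.mclosure_swap_castSucc_succ]; trivial
    induction hσ using Submonoid.closure_induction generalizing v with
    | mem τ hτ =>
      obtain ⟨i, rfl⟩ := hτ
      exact iter_swap hU hg n x hx i v
    | one => rfl
    | mul a b _ _ ha hb =>
      rw [Equiv.Perm.coe_mul, ← Function.comp_assoc, hb, ha]

lemma iter_diag {U : Set E} (hU : IsOpen U) {g : E → G} (hg : ContDiffOn ℝ ∞ g U) (x v : E)
    (k : ℕ) : ∀ t : ℝ, x + t • v ∈ U → iteratedDeriv k (fun t : ℝ => g (x + t • v)) t =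
      iteratedFDeriv ℝ k g (x + t • v) (fun _ => v) := by
  induction k with
  | zero => intro t ht; simp
  | succ k ih =>
    intro t ht
    have hc : HasDerivAt (fun t : ℝ => x + t • v) v t := by
      simpa using ((hasDerivAt_id t).smul_const v).const_add x
    have hd : DifferentiableAt ℝ (iteratedFDeriv ℝ k g) (x + t • v) :=
          (cd_iter hU hg k ht).differentiableAt (by simp)
    have e1 := (ContinuousMultilinearMap.apply ℝ (fun _ : Fin k => E) G
          (fun _ => v)).hasFDerivAt.comp_hasDerivAt t (hd.hasFDerivAt.comp_hasDerivAt t hc)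
    have hcont : Continuous fun t : ℝ => x + t • v := by fun_prop
    have e2 := e1.congr_of_eventuallyEq (f₁ := iteratedDeriv k (fun t : ℝ => g (x + t • v))) (by
      filter_upwards [(hU.preimage hcont).mem_nhds ht] with s hs
      exact ih s hs)
    rw [iteratedDeriv_succ, e2.deriv, iteratedFDeriv_succ_apply_left]
    rfl

end polar

section descent
variable {E F G : Type*} [NormedAddCommGroup E] [NormedSpace ℝ E]
  [NormedAddCommGroup F] [NormedSpace ℝ F] [NormedAddCommGroup G] [NormedSpace ℝ G]

lemma exists_lift (j : F →ₗᵢ[ℝ] G) {k : ℕ} (M : E [×k]→L[ℝ] G)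
    (h : ∀ v, M v ∈ LinearMap.range j.toLinearMap) :
    ∃ q : E [×k]→L[ℝ] F, ∀ v, j (q v) = M v := by
  let e := j.equivRange
  refine ⟨(e.symm.toContinuousLinearEquiv : _ →L[ℝ] F).compContinuousMultilinearMap
    (M.codRestrict _ h), fun v => ?_⟩
  have : e (e.symm (M.codRestrict _ h v)) = M.codRestrict _ h v := e.apply_symm_apply _
  exact congrArg Subtype.val this

lemma hasFDerivWithinAt_of_isometry (j : F → G) (hj : ∀ a, ‖j a‖ = ‖a‖)
    (hsub : ∀ a b, j (a - b) = j a - j b) {s : Set E} {u : E → F} {U : E → G}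
    {L : E →L[ℝ] F} {L' : E →L[ℝ] G} {x : E} (hx : x ∈ s)
    (hu : ∀ y ∈ s, j (u y) = U y) (hL : ∀ y, j (L y) = L' y)
    (h : HasFDerivWithinAt U L' s x) : HasFDerivWithinAt u L s x := by
  rw [hasFDerivWithinAt_iff_isLittleO] at h ⊢
  refine Asymptotics.IsLittleO.of_norm_left (h.norm_left.congr' ?_ EventuallyEq.rfl)
  filter_upwards [self_mem_nhdsWithin] with y hy
  rw [← hj, hsub, hsub, hu y hy, hu x hx, hL]

lemma descent (j : F →ₗᵢ[ℝ] G) {U : Set E} (hU : IsOpen U) {f : E → F} (hf : ArcSm f U)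
    (hg : ContDiffOn ℝ ∞ (j ∘ f) U) : ContDiffOn ℝ ∞ f U := by
  have hr : ∀ x ∈ U, ∀ k, ∀ v, iteratedFDeriv ℝ k (j ∘ f) x v ∈ LinearMap.range j.toLinearMap := by
    intro x hx k
    refine polarization (LinearMap.range j.toLinearMap)
      (iteratedFDeriv ℝ k (j ∘ f) x).toMultilinearMap
      (fun σ v => iter_perm hU hg k hx σ v) (fun v => ?_)
    have h1 := iter_diag hU hg x v k 0 (by simpa using hx)
    have h2 : ContDiffAt ℝ ∞ (fun t : ℝ => f (x + t • v)) 0 := hf.cda (by simpa using hx)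
    have h3 := j.toContinuousLinearMap.iteratedFDeriv_comp_left (contDiffAt_infty.1 h2 k)
      (i := k) le_rfl
    have h4 := congrArg (fun m => m (fun _ => (1 : ℝ))) h3
    refine ⟨iteratedDeriv k (fun t : ℝ => f (x + t • v)) 0, ?_⟩
    simp only [zero_smul, add_zero] at h1
    refine Eq.trans ?_ h1
    exact h4.symm
  have hq : ∀ x k, ∃ q : E [×k]→L[ℝ] F, x ∈ U →
      ∀ v, j (q v) = iteratedFDeriv ℝ k (j ∘ f) x v := by
    intro x k
    by_cases hx : x ∈ U
    · obtain ⟨q, hq⟩ := exists_lift j _ (hr x hx k)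
      exact ⟨q, fun _ => hq⟩
    · exact ⟨0, fun h => absurd h hx⟩
  choose q hq using hq
  have hder : ∀ (m : ℕ), ∀ x ∈ U, HasFDerivWithinAt (q · m) (q x m.succ).curryLeft U x := by
    intro m x hx
    refine hasFDerivWithinAt_of_isometry
      (fun a : E [×m]→L[ℝ] F => j.toContinuousLinearMap.compContinuousMultilinearMap a)
      (fun a => j.norm_compContinuousMultilinearMap a) ?_ (U := iteratedFDeriv ℝ m (j ∘ f))
      (L' := fderiv ℝ (iteratedFDeriv ℝ m (j ∘ f)) x) hx ?_ ?_ ?_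
    · intro a b; ext v; simp
    · intro y hy; ext v; exact hq y m hy v
    · intro y
      ext v
      have := hq x (m + 1) hx (Fin.cons y v)
      rw [iteratedFDeriv_succ_apply_left] at this
      simpa using this
    · exact ((cd_iter hU hg m hx).differentiableAt (by simp)).hasFDerivAt.hasFDerivWithinAt
  have hT : HasFTaylorSeriesUpToOn ∞ f q U :=
    { zero_eq := fun x hx => j.injective (by
        have := hq x 0 hx 0
        simpa using this)
      fderivWithin := fun m _ x hx => hder m x hx
      cont := fun m _ x hx => (hder m x hx).continuousWithinAt }
  exact hT.contDiffOn

end descent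

universe u v

lemma contDiffOn_of_arcSm {E : Type u} {F : Type v} [NormedAddCommGroup E] [NormedSpace ℝ E]
    [NormedAddCommGroup F] [NormedSpace ℝ F] {U : Set E} (hU : IsOpen U) {f : E → F}
    (hf : ArcSm f U) : ContDiffOn ℝ ∞ f U := by
  let j : F →ₗᵢ[ℝ] ULift.{u} (UniformSpace.Completion F) :=
    (LinearIsometryEquiv.ulift ℝ (UniformSpace.Completion F)).symm.toLinearIsometry.comp
      (UniformSpace.Completion.toComplₗᵢ)
  have : CompleteSpace (ULift.{u} (UniformSpace.Completion F)) := inferInstance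
  refine descent j hU hf ?_
  rw [contDiffOn_infty]
  intro n
  exact contDiffOn_complete_nat.{u, v} hU n (hf.clm j.toContinuousLinearMap)

end Boman

theorem stmt14 {E F : Type*} [NormedAddCommGroup E] [NormedSpace ℝ E]
    [NormedAddCommGroup F] [NormedSpace ℝ F] {U : Set E} (hU : IsOpen U) (f : E → F) :
    ContDiffOn ℝ (⊤ : ℕ∞) f U ↔
      ∀ c : ℝ → E, ContDiff ℝ (⊤ : ℕ∞) c → Set.range c ⊆ U →
        ContDiff ℝ (⊤ : ℕ∞) (f ∘ c) := by
  constructor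
  · intro hf c hc hr
    exact hf.comp_contDiff hc (fun t => hr (Set.mem_range_self t))
  · intro h
    exact Boman.contDiffOn_of_arcSm hU (Boman.arcSm_of_global hU h)
end
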